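/- arXiv:1504.05293 — 4 statements merged into one kernel-verified Lean document; each statement's English description precedes it below -/
import Mathlib

section
/- For every γ ∈ {0, 1, 3, 5, 7, 10} and δ = 10 − γ, the complete graph K₂₁ admits a decomposition of its edge set into γ C₃-factors and δ C₇-factors. -/
open SimpleGraph

/-- `F` is an `H`-factor (of the complete graph on its vertex type, or of any graph
containing it): every connected component of `F`, viewed as an induced subgraph,
is isomorphic to `H`.  Since `F` is a graph on all of `V`, it is automatically spanning. -/
def IsHFactor {V W : Type*} (H : SimpleGraph W) (F : SimpleGraph V) : Prop :=
  ∀ c : F.ConnectedComponent, Nonempty (F.induce c.supp ≃g H)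

/-- A `C_k`-factor: a spanning subgraph each of whose connected components is a
cycle of length `k` (in particular it is 2-regular). -/
def IsCycleFactor {V : Type*} (k : ℕ) (F : SimpleGraph V) : Prop :=
  IsHFactor (SimpleGraph.cycleGraph k) F

/-- `(G; C_m^r, C_k^s)`: a partition of the edge set of `G` into `r` `C_m`-factors
and `s` `C_k`-factors. -/
def IsCycleDecomp {V : Type*} (G : SimpleGraph V) (m k r s : ℕ) : Prop :=
  ∃ F : Fin r ⊕ Fin s → SimpleGraph V,
    (∀ i, F i ≤ G) ∧
    (∀ e ∈ G.edgeSet, ∃! i, e ∈ (F i).edgeSet) ∧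
    (∀ i : Fin r, IsCycleFactor m (F (Sum.inl i))) ∧
    (∀ j : Fin s, IsCycleFactor k (F (Sum.inr j)))

/-- Disjoint copies of the `k`-cycle, pulled back along `f`. -/
def cycGraph {V : Type*} {m k : ℕ} (f : V → Fin m × Fin k) : SimpleGraph V where
  Adj u v := (f u).1 = (f v).1 ∧ (cycleGraph k).Adj (f u).2 (f v).2
  symm := ⟨fun _ _ h => ⟨h.1.symm, h.2.symm⟩⟩
  loopless := ⟨fun _ h => h.2.ne rfl⟩

theorem cycGraph_isCycleFactor {V : Type*} {m k : ℕ} (f : V → Fin m × Fin k)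
    (hf : Function.Bijective f) : IsCycleFactor k (cycGraph f) := by
  have key : ∀ u v, (cycGraph f).Reachable u v ↔ (f u).1 = (f v).1 := by
    intro u v
    constructor
    · rintro ⟨w⟩
      induction w with
      | nil => rfl
      | cons h _ ih => exact h.1.trans ih
    · intro h
      let e := Equiv.ofBijective f hf
      let φ : cycleGraph k →g cycGraph f :=
        { toFun := fun j => e.symm ((f u).1, j)
          map_rel' := by
            intro a b hab
            have h1 : ∀ j, f (e.symm ((f u).1, j)) = ((f u).1, j) := fun j =>
              e.apply_symm_apply _
            refine ⟨?_, ?_⟩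
            · rw [h1, h1]
            · rw [h1, h1]; exact hab }
      have hr := (cycleGraph_preconnected (f u).2 (f v).2).map φ
      have hu : φ (f u).2 = u := e.symm_apply_apply u
      have hv : φ (f v).2 = v := by
        change e.symm ((f u).1, (f v).2) = v
        rw [h]; exact e.symm_apply_apply v
      rwa [hu, hv] at hr
  intro c
  induction c using ConnectedComponent.ind with
  | _ v =>
    have hm : ∀ u, u ∈ ((cycGraph f).connectedComponentMk v).supp ↔ (f u).1 = (f v).1 := by
      intro u
      rw [ConnectedComponent.mem_supp_iff, ConnectedComponent.eq, key]
    refine ⟨⟨Equiv.ofBijective (fun u => (f u.1).2) ⟨?_, ?_⟩, ?_⟩⟩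
    · rintro ⟨a, ha⟩ ⟨b, hb⟩ hab
      exact Subtype.ext (hf.1 (Prod.ext (((hm a).1 ha).trans ((hm b).1 hb).symm) hab))
    · intro j
      obtain ⟨u, hu⟩ := hf.2 ((f v).1, j)
      refine ⟨⟨u, (hm u).2 (by rw [hu])⟩, ?_⟩
      change (f u).2 = j
      rw [hu]
    · rintro ⟨a, ha⟩ ⟨b, hb⟩
      change (cycleGraph k).Adj (f a).2 (f b).2 ↔
        ((f a).1 = (f b).1 ∧ (cycleGraph k).Adj (f a).2 (f b).2)
      exact ⟨fun h => ⟨((hm a).1 ha).trans ((hm b).1 hb).symm, h⟩, fun h => h.2⟩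

/-- Position of `u` in row `i` of a table. -/
def tpos (A : List (List ℕ)) (i : ℕ) (u : Fin 21) : ℕ := (A.getD i []).getD u.val 0

/-- Adjacency of positions in the disjoint union of cycles of length `k`. -/
def padj (k p q : ℕ) : Bool :=
  Nat.beq (p / k) (q / k) &&
    (Nat.beq ((p % k + 1) % k) (q % k) || Nat.beq ((q % k + 1) % k) (p % k))

/-- Row `i` as a map to (cycle, place in the cycle). -/
def tmap (m k : ℕ) (hm : 0 < m) (hk : 0 < k) (A : List (List ℕ)) (i : ℕ) (u : Fin 21) :
    Fin m × Fin k :=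
  (⟨tpos A i u / k % m, Nat.mod_lt _ hm⟩, ⟨tpos A i u % k, Nat.mod_lt _ hk⟩)

theorem adj_three : ∀ a b : Fin 3, (cycleGraph 3).Adj a b ↔
    ((a.val + 1) % 3 = b.val ∨ (b.val + 1) % 3 = a.val) := by decide

theorem adj_seven : ∀ a b : Fin 7, (cycleGraph 7).Adj a b ↔
    ((a.val + 1) % 7 = b.val ∨ (b.val + 1) % 7 = a.val) := by decide

theorem tmap_adj (m k : ℕ) (hm : 0 < m) (hk : 0 < k) (hmk : m * k = 21)
    (hadj : ∀ a b : Fin k, (cycleGraph k).Adj a b ↔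
      ((a.val + 1) % k = b.val ∨ (b.val + 1) % k = a.val))
    (A : List (List ℕ)) (i : ℕ) (hA : ∀ u, tpos A i u < 21) (u v : Fin 21) :
    (cycGraph (tmap m k hm hk A i)).Adj u v ↔ padj k (tpos A i u) (tpos A i v) = true := by
  have h : ∀ u, tpos A i u / k % m = tpos A i u / k := fun u =>
    Nat.mod_eq_of_lt (by rw [Nat.div_lt_iff_lt_mul hk, hmk]; exact hA u)
  change ((tmap m k hm hk A i u).1 = (tmap m k hm hk A i v).1 ∧ _) ↔ _
  rw [hadj]
  simp only [tmap, Fin.mk.injEq, h, padj, Bool.and_eq_true, Bool.or_eq_true, Nat.beq_eq]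

theorem tmap_bij (m k : ℕ) (hm : 0 < m) (hk : 0 < k) (hmk : m * k = 21)
    (A : List (List ℕ)) (i : ℕ) (hA : ∀ u, tpos A i u < 21)
    (hinj : ∀ u v, tpos A i u = tpos A i v → u = v) :
    Function.Bijective (tmap m k hm hk A i) := by
  have h : ∀ u, tpos A i u / k % m = tpos A i u / k := fun u =>
    Nat.mod_eq_of_lt (by rw [Nat.div_lt_iff_lt_mul hk, hmk]; exact hA u)
  rw [Fintype.bijective_iff_injective_and_card]
  refine ⟨fun u v huv => hinj u v ?_, by simp [hmk]⟩
  simp only [tmap, Prod.mk.injEq, Fin.mk.injEq, h] at huv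
  rw [← Nat.div_add_mod (tpos A i u) k, ← Nat.div_add_mod (tpos A i v) k, huv.1, huv.2]

/-- Every row of the table is a permutation of `0, …, 20`. -/
def TableOK (A : List (List ℕ)) (r : ℕ) : Prop :=
  ∀ i : Fin r, (∀ u, tpos A i u < 21) ∧ ∀ u v, tpos A i u = tpos A i v → u = v

/-- Adjacency in the factor with index `i`. -/
def fadj (A B : List (List ℕ)) {r s : ℕ} (i : Fin r ⊕ Fin s) (u v : Fin 21) : Bool :=
  match i with
  | .inl i => padj 3 (tpos A i u) (tpos A i v)
  | .inr j => padj 7 (tpos B j u) (tpos B j v)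

theorem decomp_of_tables (A B : List (List ℕ)) (r s : ℕ) (hA : TableOK A r) (hB : TableOK B s)
    (hE : ∀ u v : Fin 21, u ≠ v → ∃ i : Fin r ⊕ Fin s, fadj A B i u v = true ∧
      ∀ j : Fin r ⊕ Fin s, fadj A B j u v = true → j = i) :
    IsCycleDecomp (⊤ : SimpleGraph (Fin 21)) 3 7 r s := by
  let F : Fin r ⊕ Fin s → SimpleGraph (Fin 21) := fun i =>
    match i with
    | .inl i => cycGraph (tmap 7 3 (by decide) (by decide) A i)
    | .inr j => cycGraph (tmap 3 7 (by decide) (by decide) B j)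
  have hF : ∀ i u v, (F i).Adj u v ↔ fadj A B i u v = true := by
    rintro (i | j) u v
    · exact tmap_adj 7 3 _ _ rfl adj_three A i (hA i).1 u v
    · exact tmap_adj 3 7 _ _ rfl adj_seven B j (hB j).1 u v
  refine ⟨F, fun i => le_top, ?_, ?_, ?_⟩
  · intro e
    induction e using Sym2.ind with
    | _ u v =>
      intro he
      obtain ⟨i, hi, hu⟩ := hE u v he
      exact ⟨i, (hF i u v).2 hi, fun j hj => hu j ((hF j u v).1 hj)⟩
  · intro i
    exact cycGraph_isCycleFactor _ (tmap_bij 7 3 _ _ rfl A i (hA i).1 (hA i).2)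
  · intro j
    exact cycGraph_isCycleFactor _ (tmap_bij 3 7 _ _ rfl B j (hB j).1 (hB j).2)

instance (A : List (List ℕ)) (r : ℕ) : Decidable (TableOK A r) := by
  unfold TableOK; infer_instance

theorem decomp_0 : IsCycleDecomp (⊤ : SimpleGraph (Fin 21)) 3 7 0 10 := by
  refine decomp_of_tables
   []
   [[0, 1, 2, 3, 4, 5, 6, 7, 8, 9, 10, 11, 12, 13, 14, 15, 16, 17, 18, 19, 20],
   [0, 4, 1, 5, 2, 6, 3, 7, 11, 8, 12, 9, 13, 10, 14, 18, 15, 19, 16, 20, 17],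
   [0, 5, 3, 1, 6, 4, 2, 7, 12, 10, 8, 13, 11, 9, 14, 19, 17, 15, 20, 18, 16],
   [7, 12, 0, 10, 2, 14, 5, 15, 17, 1, 6, 19, 4, 9, 13, 18, 20, 16, 11, 8, 3],
   [5, 7, 12, 0, 10, 2, 14, 9, 15, 17, 1, 6, 19, 4, 3, 13, 18, 20, 16, 11, 8],
   [14, 5, 7, 12, 0, 10, 2, 4, 9, 15, 17, 1, 6, 19, 8, 3, 13, 18, 20, 16, 11],
   [2, 14, 5, 7, 12, 0, 10, 19, 4, 9, 15, 17, 1, 6, 11, 8, 3, 13, 18, 20, 16],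
   [10, 2, 14, 5, 7, 12, 0, 6, 19, 4, 9, 15, 17, 1, 16, 11, 8, 3, 13, 18, 20],
   [0, 10, 2, 14, 5, 7, 12, 1, 6, 19, 4, 9, 15, 17, 20, 16, 11, 8, 3, 13, 18],
   [12, 0, 10, 2, 14, 5, 7, 17, 1, 6, 19, 4, 9, 15, 18, 20, 16, 11, 8, 3, 13]]
   0 10 ?_ ?_ ?_ <;> decide +kernel

theorem decomp_1 : IsCycleDecomp (⊤ : SimpleGraph (Fin 21)) 3 7 1 9 := by
  refine decomp_of_tables
   [[0, 1, 2, 3, 4, 5, 6, 7, 8, 9, 10, 11, 12, 13, 14, 15, 16, 17, 18, 19, 20]]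
   [[14, 7, 18, 10, 0, 2, 12, 9, 4, 1, 17, 19, 5, 20, 3, 13, 15, 6, 11, 16, 8],
   [18, 14, 7, 2, 10, 0, 4, 12, 9, 19, 1, 17, 3, 5, 20, 6, 13, 15, 8, 11, 16],
   [7, 18, 14, 0, 2, 10, 9, 4, 12, 17, 19, 1, 20, 3, 5, 15, 6, 13, 16, 8, 11],
   [14, 0, 18, 20, 16, 5, 15, 17, 2, 7, 3, 6, 13, 19, 11, 8, 1, 10, 4, 9, 12],
   [18, 14, 0, 5, 20, 16, 2, 15, 17, 6, 7, 3, 11, 13, 19, 10, 8, 1, 12, 4, 9],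
   [0, 18, 14, 16, 5, 20, 17, 2, 15, 3, 6, 7, 19, 11, 13, 1, 10, 8, 9, 12, 4],
   [7, 0, 14, 16, 13, 8, 11, 4, 1, 10, 18, 5, 3, 9, 20, 19, 12, 17, 6, 2, 15],
   [14, 7, 0, 8, 16, 13, 1, 11, 4, 5, 10, 18, 20, 3, 9, 17, 19, 12, 15, 6, 2],
   [0, 14, 7, 13, 8, 16, 4, 1, 11, 18, 5, 10, 9, 20, 3, 12, 17, 19, 2, 15, 6]]
   1 9 ?_ ?_ ?_ <;> decide +kernel

theorem decomp_3 : IsCycleDecomp (⊤ : SimpleGraph (Fin 21)) 3 7 3 7 := by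
  refine decomp_of_tables
   [[0, 3, 6, 9, 12, 15, 18, 1, 4, 7, 10, 13, 16, 19, 2, 5, 8, 11, 14, 17, 20],
   [0, 3, 6, 9, 12, 15, 18, 19, 1, 4, 7, 10, 13, 16, 14, 17, 20, 2, 5, 8, 11],
   [0, 3, 6, 9, 12, 15, 18, 16, 19, 1, 4, 7, 10, 13, 5, 8, 11, 14, 17, 20, 2]]
   [[0, 1, 7, 2, 5, 14, 3, 9, 8, 4, 12, 16, 10, 13, 15, 6, 17, 20, 11, 19, 18],
   [3, 0, 1, 7, 2, 5, 14, 13, 9, 8, 4, 12, 16, 10, 18, 15, 6, 17, 20, 11, 19],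
   [14, 3, 0, 1, 7, 2, 5, 10, 13, 9, 8, 4, 12, 16, 19, 18, 15, 6, 17, 20, 11],
   [5, 14, 3, 0, 1, 7, 2, 16, 10, 13, 9, 8, 4, 12, 11, 19, 18, 15, 6, 17, 20],
   [2, 5, 14, 3, 0, 1, 7, 12, 16, 10, 13, 9, 8, 4, 20, 11, 19, 18, 15, 6, 17],
   [7, 2, 5, 14, 3, 0, 1, 4, 12, 16, 10, 13, 9, 8, 17, 20, 11, 19, 18, 15, 6],
   [1, 7, 2, 5, 14, 3, 0, 8, 4, 12, 16, 10, 13, 9, 6, 17, 20, 11, 19, 18, 15]]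
   3 7 ?_ ?_ ?_ <;> decide +kernel

theorem decomp_5 : IsCycleDecomp (⊤ : SimpleGraph (Fin 21)) 3 7 5 5 := by
  refine decomp_of_tables
   [[9, 10, 15, 3, 16, 0, 17, 12, 1, 6, 18, 2, 4, 7, 5, 20, 14, 8, 11, 13, 19],
   [16, 9, 10, 15, 3, 6, 0, 17, 12, 1, 5, 18, 2, 4, 7, 13, 20, 14, 8, 11, 19],
   [3, 16, 9, 10, 15, 1, 6, 0, 17, 12, 7, 5, 18, 2, 4, 11, 13, 20, 14, 8, 19],
   [15, 3, 16, 9, 10, 12, 1, 6, 0, 17, 4, 7, 5, 18, 2, 8, 11, 13, 20, 14, 19],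
   [10, 15, 3, 16, 9, 17, 12, 1, 6, 0, 2, 4, 7, 5, 18, 14, 8, 11, 13, 20, 19]]
   [[14, 7, 19, 0, 12, 20, 4, 3, 9, 6, 15, 5, 11, 17, 18, 13, 16, 2, 1, 10, 8],
   [12, 14, 7, 19, 0, 6, 20, 4, 3, 9, 18, 15, 5, 11, 17, 10, 13, 16, 2, 1, 8],
   [0, 12, 14, 7, 19, 9, 6, 20, 4, 3, 17, 18, 15, 5, 11, 1, 10, 13, 16, 2, 8],
   [19, 0, 12, 14, 7, 3, 9, 6, 20, 4, 11, 17, 18, 15, 5, 2, 1, 10, 13, 16, 8],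
   [7, 19, 0, 12, 14, 4, 3, 9, 6, 20, 5, 11, 17, 18, 15, 16, 2, 1, 10, 13, 8]]
   5 5 ?_ ?_ ?_ <;> decide +kernel

theorem decomp_7 : IsCycleDecomp (⊤ : SimpleGraph (Fin 21)) 3 7 7 3 := by
  refine decomp_of_tables
   [[0, 3, 6, 12, 15, 18, 9, 1, 17, 4, 19, 8, 11, 13, 2, 20, 14, 5, 10, 16, 7],
   [9, 0, 3, 6, 12, 15, 18, 13, 1, 17, 4, 19, 8, 11, 7, 2, 20, 14, 5, 10, 16],
   [18, 9, 0, 3, 6, 12, 15, 11, 13, 1, 17, 4, 19, 8, 16, 7, 2, 20, 14, 5, 10],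
   [15, 18, 9, 0, 3, 6, 12, 8, 11, 13, 1, 17, 4, 19, 10, 16, 7, 2, 20, 14, 5],
   [12, 15, 18, 9, 0, 3, 6, 19, 8, 11, 13, 1, 17, 4, 5, 10, 16, 7, 2, 20, 14],
   [6, 12, 15, 18, 9, 0, 3, 4, 19, 8, 11, 13, 1, 17, 14, 5, 10, 16, 7, 2, 20],
   [3, 6, 12, 15, 18, 9, 0, 17, 4, 19, 8, 11, 13, 1, 20, 14, 5, 10, 16, 7, 2]]
   [[0, 1, 2, 3, 4, 5, 6, 7, 8, 9, 10, 11, 12, 13, 14, 15, 16, 17, 18, 19, 20],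
   [0, 4, 1, 5, 2, 6, 3, 7, 11, 8, 12, 9, 13, 10, 14, 18, 15, 19, 16, 20, 17],
   [0, 5, 3, 1, 6, 4, 2, 7, 12, 10, 8, 13, 11, 9, 14, 19, 17, 15, 20, 18, 16]]
   7 3 ?_ ?_ ?_ <;> decide +kernel

theorem decomp_10 : IsCycleDecomp (⊤ : SimpleGraph (Fin 21)) 3 7 10 0 := by
  refine decomp_of_tables
   [[0, 3, 6, 9, 12, 15, 18, 1, 4, 7, 10, 13, 16, 19, 2, 5, 8, 11, 14, 17, 20],
   [0, 3, 6, 9, 12, 15, 18, 19, 1, 4, 7, 10, 13, 16, 14, 17, 20, 2, 5, 8, 11],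
   [0, 3, 6, 9, 12, 15, 18, 16, 19, 1, 4, 7, 10, 13, 5, 8, 11, 14, 17, 20, 2],
   [12, 18, 9, 3, 5, 6, 4, 0, 10, 8, 13, 1, 2, 20, 15, 14, 17, 7, 11, 19, 16],
   [4, 12, 18, 9, 3, 5, 6, 20, 0, 10, 8, 13, 1, 2, 16, 15, 14, 17, 7, 11, 19],
   [6, 4, 12, 18, 9, 3, 5, 2, 20, 0, 10, 8, 13, 1, 19, 16, 15, 14, 17, 7, 11],
   [5, 6, 4, 12, 18, 9, 3, 1, 2, 20, 0, 10, 8, 13, 11, 19, 16, 15, 14, 17, 7],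
   [3, 5, 6, 4, 12, 18, 9, 13, 1, 2, 20, 0, 10, 8, 7, 11, 19, 16, 15, 14, 17],
   [9, 3, 5, 6, 4, 12, 18, 8, 13, 1, 2, 20, 0, 10, 17, 7, 11, 19, 16, 15, 14],
   [18, 9, 3, 5, 6, 4, 12, 10, 8, 13, 1, 2, 20, 0, 14, 17, 7, 11, 19, 16, 15]]
   []
   10 0 ?_ ?_ ?_ <;> decide +kernel

/-- Lemma 3.1: `(K₂₁; C₃^γ, C₇^δ)` exists for `γ ∈ {0,1,3,5,7,10}` with `γ + δ = 10`. -/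
theorem K21_cycle_decomp_basic (γ δ : ℕ) (hγ : γ ∈ ({0, 1, 3, 5, 7, 10} : Set ℕ))
    (hγδ : γ + δ = 10) :
    IsCycleDecomp (⊤ : SimpleGraph (Fin 21)) 3 7 γ δ := by
  rcases hγ with rfl | rfl | rfl | rfl | rfl | rfl
  · obtain rfl : δ = 10 := by omega
    exact decomp_0
  · obtain rfl : δ = 9 := by omega
    exact decomp_1
  · obtain rfl : δ = 7 := by omega
    exact decomp_3
  · obtain rfl : δ = 5 := by omega
    exact decomp_5
  · obtain rfl : δ = 3 := by omega
    exact decomp_7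
  · obtain rfl : δ = 0 := by omega
    exact decomp_10
end

section
/- The complete graph K₂₁ admits a decomposition of its edge set into 8 C₃-factors and 2 C₇-factors. -/
open SimpleGraph

/-- The graph of disjoint `k`-cycles given by cycle/position coordinates. -/
def cycG {V A : Type} (k : ℕ) (h : V → A × Fin k) : SimpleGraph V where
  Adj u v := (h u).1 = (h v).1 ∧ (cycleGraph k).Adj (h u).2 (h v).2
  symm := ⟨fun _ _ hh => ⟨hh.1.symm, hh.2.symm⟩⟩
  loopless := ⟨fun _ hh => hh.2.ne rfl⟩

instance {V A : Type} [DecidableEq A] (k : ℕ) (h : V → A × Fin k) :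
    DecidableRel (cycG k h).Adj := fun u v =>
  inferInstanceAs (Decidable ((h u).1 = (h v).1 ∧ (cycleGraph k).Adj (h u).2 (h v).2))

theorem cycG_reach_fst {V A : Type} {k : ℕ} {h : V → A × Fin k} {u v : V}
    (r : (cycG k h).Reachable u v) : (h u).1 = (h v).1 := by
  obtain ⟨w⟩ := r
  induction w with
  | nil => rfl
  | cons hd _ ih => exact hd.1.trans ih

theorem cycG_reach {V A : Type} {k : ℕ} {h : V → A × Fin (k + 1)}
    (hb : Function.Bijective h) {u v : V} (huv : (h u).1 = (h v).1) :
    (cycG (k + 1) h).Reachable u v := by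
  let e := Equiv.ofBijective h hb
  have he : ∀ x, h (e.symm x) = x := fun x => e.apply_symm_apply x
  let f : cycleGraph (k + 1) →g cycG (k + 1) h :=
    { toFun := fun p => e.symm ((h u).1, p)
      map_rel' := by
        intro a b hab
        refine ⟨?_, ?_⟩
        · rw [he, he]
        · rw [he, he]; exact hab }
  have hr := ((cycleGraph_connected (n := k)).preconnected (h u).2 (h v).2).map f
  have h1 : f (h u).2 = u := e.symm_apply_apply u
  have h2 : f (h v).2 = v := by
    change e.symm ((h u).1, (h v).2) = v
    rw [huv]; exact e.symm_apply_apply v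
  rwa [h1, h2] at hr

theorem cycG_factor {V A : Type} {k : ℕ} {h : V → A × Fin (k + 1)}
    (hb : Function.Bijective h) : IsCycleFactor (k + 1) (cycG (k + 1) h) := by
  intro c
  induction c using ConnectedComponent.ind with
  | h u =>
  have hs : ∀ v, v ∈ ((cycG (k + 1) h).connectedComponentMk u).supp ↔ (h v).1 = (h u).1 := by
    intro v
    rw [ConnectedComponent.mem_supp_iff, ConnectedComponent.eq]
    exact ⟨cycG_reach_fst, cycG_reach hb⟩
  let q : ((cycG (k + 1) h).connectedComponentMk u).supp → Fin (k + 1) := fun v => (h v.1).2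
  have hq : Function.Bijective q := by
    constructor
    · intro a b hab
      apply Subtype.ext
      apply hb.1
      exact Prod.ext (((hs _).1 a.2).trans ((hs _).1 b.2).symm) hab
    · intro p
      obtain ⟨v, hv⟩ := hb.2 ((h u).1, p)
      exact ⟨⟨v, (hs v).2 (by rw [hv])⟩, by simp [q, hv]⟩
  refine ⟨⟨Equiv.ofBijective q hq, ?_⟩⟩
  intro a b
  constructor
  · intro hab
    exact ⟨((hs _).1 a.2).trans ((hs _).1 b.2).symm, hab⟩
  · intro hab
    exact hab.2

/-- Block and position of each point of the base parallel class. -/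
def baseTab : Fin 21 → Fin 21 := ![0, 1, 3, 6, 9, 12, 15, 7, 18, 2, 10, 16, 4, 19, 17, 13, 11, 20, 14, 8, 5]

def splitTri (n : Fin 21) : Fin 7 × Fin 3 :=
  (Fin.ofNat 7 (n.1 / 3), Fin.ofNat 3 (n.1 % 3))

/-- Coordinates for the triangle factors: seven translates and one fixed class. -/
def triH (i : Fin 8) (v : Fin 21) : Fin 7 × Fin 3 :=
  if i.1 < 7 then
    splitTri (baseTab (Fin.ofNat 21 (7 * (v.1 / 7) + (v.1 % 7 + 7 - i.1) % 7)))
  else (Fin.ofNat 7 (v.1 % 7), Fin.ofNat 3 (v.1 / 7))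

/-- Inverses mod 7 of the differences used by the 7-cycles. -/
def sepMul : Fin 2 → Fin 3 → ℕ := ![![4, 1, 1], ![5, 5, 4]]

/-- Coordinates for the heptagon factors. -/
def sepH (j : Fin 2) (v : Fin 21) : Fin 3 × Fin 7 :=
  (Fin.ofNat 3 (v.1 / 7), Fin.ofNat 7 (v.1 * sepMul j (Fin.ofNat 3 (v.1 / 7))))

theorem triH_inj : ∀ i u v, triH i u = triH i v → u = v := by decide +kernel

theorem sepH_inj : ∀ j u v, sepH j u = sepH j v → u = v := by decide +kernel

def facF : Fin 8 ⊕ Fin 2 → SimpleGraph (Fin 21)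
  | Sum.inl i => cycG 3 (triH i)
  | Sum.inr j => cycG 7 (sepH j)

instance : ∀ i, DecidableRel (facF i).Adj
  | Sum.inl i => inferInstanceAs (DecidableRel (cycG 3 (triH i)).Adj)
  | Sum.inr j => inferInstanceAs (DecidableRel (cycG 7 (sepH j)).Adj)

theorem facF_part : ∀ u v : Fin 21, u ≠ v →
    ∃ i, (facF i).Adj u v ∧ ∀ j, (facF j).Adj u v → j = i := by decide +kernel

/-- Lemma 3.2: `(K₂₁; C₃^8, C₇^2)` exists. -/
theorem K21_cycle_decomp_8_2 :
    IsCycleDecomp (⊤ : SimpleGraph (Fin 21)) 3 7 8 2 := by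
  refine ⟨facF, fun _ => le_top, ?_, ?_, ?_⟩
  · intro e
    induction e using Sym2.ind with
    | _ u v =>
    intro he
    exact facF_part u v ((⊤ : SimpleGraph (Fin 21)).ne_of_adj he)
  · intro i
    refine cycG_factor (k := 2) (h := triH i) ?_
    exact (Fintype.bijective_iff_injective_and_card _).2 ⟨fun u v => triH_inj i u v, by simp⟩
  · intro j
    refine cycG_factor (k := 6) (h := sepH j) ?_
    exact (Fintype.bijective_iff_injective_and_card _).2 ⟨fun u v => sepH_inj j u v, by simp⟩
end

section
/- For every γ ∈ {0, 1, 3, 5, 7, 8, 9, 10} and δ = 10 − γ, the complete graph K₂₁ admits a decomposition of its edge set into γ C₃-factors and δ C₇-factors. -/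
open SimpleGraph

namespace K21

/-- Position of the vertex `u` in the cyclic listing encoded by `p`. -/
def pos (p : List ℕ) (u : Fin 21) : Fin 21 := Fin.ofNat 21 (p.getD u.1 0)

/-- Positions `a`, `b` are neighbours on a common `k`-cycle (blocks of length `k`). -/
def adjB (k a b : ℕ) : Bool :=
  (a / k).beq (b / k) && (((a + 1) % k).beq (b % k) || ((b + 1) % k).beq (a % k))

def A {r s : ℕ} (L M : List (List ℕ)) (u v : Fin 21) : Fin r ⊕ Fin s → Bool
  | .inl i => adjB 3 (pos (L.getD i.1 []) u).1 (pos (L.getD i.1 []) v).1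
  | .inr i => adjB 7 (pos (M.getD i.1 []) u).1 (pos (M.getD i.1 []) v).1

theorem factor {V : Type*} (a k : ℕ) (e : V ≃ Fin a × Fin (k + 1)) (F : SimpleGraph V)
    (h : ∀ u v, F.Adj u v ↔ (e u).1 = (e v).1 ∧ (cycleGraph (k + 1)).Adj (e u).2 (e v).2) :
    IsCycleFactor (k + 1) F := by
  have reach : ∀ u v, F.Reachable u v ↔ (e u).1 = (e v).1 := by
    intro u v
    constructor
    · rintro ⟨w⟩
      induction w with
      | nil => rfl
      | cons hh _ ih => exact ((h _ _).1 hh).1.trans ih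
    · intro huv
      let f : cycleGraph (k + 1) →g F :=
        { toFun := fun x => e.symm ((e u).1, x)
          map_rel' := by
            intro x y hxy
            rw [h]
            simpa using hxy }
      have := (cycleGraph_preconnected (n := k + 1) (e u).2 (e v).2).map f
      have h1 : f (e u).2 = u := by simp [f]
      have h2 : f (e v).2 = v := by
        change e.symm ((e u).1, (e v).2) = v
        rw [huv]; simp
      rwa [h1, h2] at this
  intro c
  induction c using SimpleGraph.ConnectedComponent.ind with
  | _ w =>
  have mem : ∀ v, v ∈ (F.connectedComponentMk w).supp ↔ (e v).1 = (e w).1 := by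
    intro v
    rw [ConnectedComponent.mem_supp_iff, ConnectedComponent.eq, reach]
  refine ⟨{ toFun := fun v => (e v.1).2
            invFun := fun x => ⟨e.symm ((e w).1, x), by rw [mem]; simp⟩
            left_inv := ?_
            right_inv := ?_
            map_rel_iff' := ?_ }⟩
  · rintro ⟨v, hv⟩
    rw [mem] at hv
    apply Subtype.ext
    change e.symm ((e w).1, (e v).2) = v
    rw [← hv]; simp
  · intro x; simp
  · rintro ⟨u, hu⟩ ⟨v, hv⟩
    rw [mem] at hu hv
    change (cycleGraph (k + 1)).Adj (e u).2 (e v).2 ↔ F.Adj u v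
    rw [h, hu, hv]; simp

theorem adj3 : ∀ a b : Fin (7 * 3), adjB 3 a.1 b.1 = true ↔
    a.divNat = b.divNat ∧ (cycleGraph 3).Adj a.modNat b.modNat := by
  decide +kernel

theorem adj7 : ∀ a b : Fin (3 * 7), adjB 7 a.1 b.1 = true ↔
    a.divNat = b.divNat ∧ (cycleGraph 7).Adj a.modNat b.modNat := by
  decide +kernel

noncomputable def posE (p : List ℕ) (h : Function.Surjective (pos p)) : Fin 21 ≃ Fin 21 :=
  Equiv.ofBijective (pos p) (Finite.surjective_iff_bijective.1 h)

theorem main {r s : ℕ} (L M : List (List ℕ))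
    (hL : ∀ i : Fin r, ∀ x, ∃ y, pos (L.getD i.1 []) y = x)
    (hM : ∀ i : Fin s, ∀ x, ∃ y, pos (M.getD i.1 []) y = x)
    (hA : ∀ u v : Fin 21, u ≠ v → ∃ i : Fin r ⊕ Fin s, A L M u v i = true ∧
      ∀ j : Fin r ⊕ Fin s, A L M u v j = true → j = i) :
    IsCycleDecomp (⊤ : SimpleGraph (Fin 21)) 3 7 r s := by
  have hsymm : ∀ (i : Fin r ⊕ Fin s) (u v : Fin 21), A L M u v i = true → A L M v u i = true := by
    have key : ∀ k a b, adjB k a b = true → adjB k b a = true := by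
      intro k a b
      simp only [adjB, Bool.and_eq_true, Bool.or_eq_true, Nat.beq_eq]
      rintro ⟨h1, h2⟩
      exact ⟨h1.symm, h2.symm⟩
    rintro (i | i) u v h
    · exact key _ _ _ h
    · exact key _ _ _ h
  have hirr : ∀ (i : Fin r ⊕ Fin s) (u : Fin 21), ¬ A L M u u i = true := by
    rintro (i | i) u h
    · exact (cycleGraph 3).loopless.irrefl _ ((adj3 _ _).1 h).2
    · exact (cycleGraph 7).loopless.irrefl _ ((adj7 _ _).1 h).2
  let F : Fin r ⊕ Fin s → SimpleGraph (Fin 21) := fun i =>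
    { Adj := fun u v => A L M u v i = true
      symm := ⟨fun u v h => hsymm i u v h⟩
      loopless := ⟨fun u h => hirr i u h⟩ }
  refine ⟨F, fun i => le_top, ?_, ?_, ?_⟩
  · intro e
    induction e using Sym2.ind with
    | _ u v =>
    intro he
    obtain ⟨i, hi, hj⟩ := hA u v he
    exact ⟨i, hi, fun j h => hj j h⟩
  · intro i
    refine factor 7 2 ((posE _ (hL i)).trans (finProdFinEquiv (m := 7) (n := 3)).symm) _ ?_
    intro u v
    exact adj3 _ _
  · intro i
    refine factor 3 6 ((posE _ (hM i)).trans (finProdFinEquiv (m := 3) (n := 7)).symm) _ ?_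
    intro u v
    exact adj7 _ _

def L0 : List (List ℕ) := []

def M0 : List (List ℕ) := [[0,7,14,5,8,19,3,9,17,1,10,15,6,11,20,4,12,18,2,13,16],
  [0,7,14,1,11,15,2,8,16,3,12,17,4,9,18,5,13,19,6,10,20],
  [0,7,14,4,12,18,1,10,15,5,8,19,2,13,16,6,11,20,3,9,17],
  [0,7,5,2,3,14,10,17,1,20,15,16,4,11,13,12,6,18,8,19,9],
  [8,19,9,0,7,5,2,3,14,10,17,1,20,15,16,4,11,13,12,6,18],
  [12,6,18,8,19,9,0,7,5,2,3,14,10,17,1,20,15,16,4,11,13],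
  [4,11,13,12,6,18,8,19,9,0,7,5,2,3,14,10,17,1,20,15,16],
  [20,15,16,4,11,13,12,6,18,8,19,9,0,7,5,2,3,14,10,17,1],
  [10,17,1,20,15,16,4,11,13,12,6,18,8,19,9,0,7,5,2,3,14],
  [2,3,14,10,17,1,20,15,16,4,11,13,12,6,18,8,19,9,0,7,5]]

theorem case0 : IsCycleDecomp (⊤ : SimpleGraph (Fin 21)) 3 7 0 10 :=
  main L0 M0 (by decide +kernel) (by decide +kernel) (by decide +kernel)

def L1 : List (List ℕ) := [[0,19,5,3,1,8,6,4,11,9,7,14,12,10,17,15,13,20,18,16,2]]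

def M1 : List (List ℕ) := [[0,7,14,4,11,18,1,8,15,5,12,19,2,9,16,6,13,20,3,10,17],
  [0,7,14,1,12,15,2,10,16,3,8,17,4,13,18,5,11,19,6,9,20],
  [0,6,7,14,11,10,12,9,3,1,16,5,19,15,8,17,2,18,4,13,20],
  [4,13,20,0,6,7,14,11,10,12,9,3,1,16,5,19,15,8,17,2,18],
  [17,2,18,4,13,20,0,6,7,14,11,10,12,9,3,1,16,5,19,15,8],
  [19,15,8,17,2,18,4,13,20,0,6,7,14,11,10,12,9,3,1,16,5],
  [1,16,5,19,15,8,17,2,18,4,13,20,0,6,7,14,11,10,12,9,3],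
  [12,9,3,1,16,5,19,15,8,17,2,18,4,13,20,0,6,7,14,11,10],
  [14,11,10,12,9,3,1,16,5,19,15,8,17,2,18,4,13,20,0,6,7]]

theorem case1 : IsCycleDecomp (⊤ : SimpleGraph (Fin 21)) 3 7 1 9 :=
  main L1 M1 (by decide +kernel) (by decide +kernel) (by decide +kernel)

def L3 : List (List ℕ) := [[0,7,5,3,10,8,6,13,11,9,16,14,12,19,17,15,1,20,18,4,2],
  [0,1,11,3,4,14,6,7,17,9,10,20,12,13,2,15,16,5,18,19,8],
  [0,19,20,3,1,2,6,4,5,9,7,8,12,10,11,15,13,14,18,16,17]]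

def M3 : List (List ℕ) := [[0,7,14,19,4,2,20,13,15,10,17,11,18,6,12,1,5,8,3,9,16],
  [3,9,16,0,7,14,19,4,2,20,13,15,10,17,11,18,6,12,1,5,8],
  [1,5,8,3,9,16,0,7,14,19,4,2,20,13,15,10,17,11,18,6,12],
  [18,6,12,1,5,8,3,9,16,0,7,14,19,4,2,20,13,15,10,17,11],
  [10,17,11,18,6,12,1,5,8,3,9,16,0,7,14,19,4,2,20,13,15],
  [20,13,15,10,17,11,18,6,12,1,5,8,3,9,16,0,7,14,19,4,2],
  [19,4,2,20,13,15,10,17,11,18,6,12,1,5,8,3,9,16,0,7,14]]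

theorem case3 : IsCycleDecomp (⊤ : SimpleGraph (Fin 21)) 3 7 3 7 :=
  main L3 M3 (by decide +kernel) (by decide +kernel) (by decide +kernel)

def L5 : List (List ℕ) := [[12,15,18,0,1,2,10,4,7,3,6,9,5,8,11,19,13,16,14,17,20],
  [14,17,20,3,6,9,7,10,4,13,16,19,0,1,2,12,15,18,8,11,5],
  [0,1,3,6,2,9,10,5,4,12,15,17,11,18,13,8,14,7,20,16,19],
  [3,0,1,9,6,2,4,10,5,17,12,15,13,11,18,7,8,14,19,20,16],
  [1,3,0,2,9,6,5,4,10,15,17,12,18,13,11,14,7,8,16,19,20]]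

def M5 : List (List ℕ) := [[0,7,14,8,15,1,9,16,2,3,10,17,19,5,12,13,20,6,18,4,11],
  [0,7,14,4,11,18,15,1,8,16,2,9,10,17,3,19,5,12,20,6,13],
  [0,7,14,2,9,16,18,4,11,15,1,8,20,6,13,19,5,12,3,10,17],
  [0,7,14,2,9,16,19,5,12,3,10,17,1,8,15,11,18,4,13,20,6],
  [0,7,14,2,9,16,19,5,12,8,15,1,13,20,6,4,11,18,17,3,10]]

theorem case5 : IsCycleDecomp (⊤ : SimpleGraph (Fin 21)) 3 7 5 5 :=
  main L5 M5 (by decide +kernel) (by decide +kernel) (by decide +kernel)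

def L7 : List (List ℕ) := [[0,3,6,9,12,15,13,7,18,19,11,14,16,17,10,8,2,1,4,20,5],
  [4,20,5,0,3,6,9,12,15,13,7,18,19,11,14,16,17,10,8,2,1],
  [8,2,1,4,20,5,0,3,6,9,12,15,13,7,18,19,11,14,16,17,10],
  [16,17,10,8,2,1,4,20,5,0,3,6,9,12,15,13,7,18,19,11,14],
  [19,11,14,16,17,10,8,2,1,4,20,5,0,3,6,9,12,15,13,7,18],
  [13,7,18,19,11,14,16,17,10,8,2,1,4,20,5,0,3,6,9,12,15],
  [9,12,15,13,7,18,19,11,14,16,17,10,8,2,1,4,20,5,0,3,6]]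

def M7 : List (List ℕ) := [[0,7,14,5,8,19,3,9,17,1,10,15,6,11,20,4,12,18,2,13,16],
  [0,7,14,4,12,18,1,10,15,5,8,19,2,13,16,6,11,20,3,9,17],
  [0,7,14,1,11,15,2,8,16,3,12,17,4,9,18,5,13,19,6,10,20]]

theorem case7 : IsCycleDecomp (⊤ : SimpleGraph (Fin 21)) 3 7 7 3 :=
  main L7 M7 (by decide +kernel) (by decide +kernel) (by decide +kernel)

def L8 : List (List ℕ) := [[0,1,2,3,4,5,6,7,8,9,10,11,12,13,14,15,16,17,18,19,20],
  [0,3,6,9,1,12,4,14,15,11,7,16,17,18,2,20,10,5,13,8,19],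
  [13,8,19,0,3,6,9,1,12,4,14,15,11,7,16,17,18,2,20,10,5],
  [20,10,5,13,8,19,0,3,6,9,1,12,4,14,15,11,7,16,17,18,2],
  [17,18,2,20,10,5,13,8,19,0,3,6,9,1,12,4,14,15,11,7,16],
  [11,7,16,17,18,2,20,10,5,13,8,19,0,3,6,9,1,12,4,14,15],
  [4,14,15,11,7,16,17,18,2,20,10,5,13,8,19,0,3,6,9,1,12],
  [9,1,12,4,14,15,11,7,16,17,18,2,20,10,5,13,8,19,0,3,6]]

def M8 : List (List ℕ) := [[0,7,14,1,8,18,2,9,15,3,10,19,4,11,16,5,12,20,6,13,17],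
  [0,7,14,5,11,19,3,8,17,1,12,15,6,9,20,4,13,18,2,10,16]]

theorem case8 : IsCycleDecomp (⊤ : SimpleGraph (Fin 21)) 3 7 8 2 :=
  main L8 M8 (by decide +kernel) (by decide +kernel) (by decide +kernel)

def L9 : List (List ℕ) := [[0,19,20,3,1,2,6,4,5,9,7,8,12,10,11,15,13,14,18,16,17],
  [0,4,8,3,7,11,6,10,14,9,13,17,12,16,20,15,19,2,18,1,5],
  [0,3,6,9,12,15,18,19,16,10,5,1,14,17,13,4,7,11,20,8,2],
  [20,8,2,0,3,6,9,12,15,18,19,16,10,5,1,14,17,13,4,7,11],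
  [4,7,11,20,8,2,0,3,6,9,12,15,18,19,16,10,5,1,14,17,13],
  [14,17,13,4,7,11,20,8,2,0,3,6,9,12,15,18,19,16,10,5,1],
  [10,5,1,14,17,13,4,7,11,20,8,2,0,3,6,9,12,15,18,19,16],
  [18,19,16,10,5,1,14,17,13,4,7,11,20,8,2,0,3,6,9,12,15],
  [9,12,15,18,19,16,10,5,1,14,17,13,4,7,11,20,8,2,0,3,6]]

def M9 : List (List ℕ) := [[0,7,14,1,11,18,2,8,15,3,12,19,4,9,16,5,13,20,6,10,17]]

theorem case9 : IsCycleDecomp (⊤ : SimpleGraph (Fin 21)) 3 7 9 1 :=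
  main L9 M9 (by decide +kernel) (by decide +kernel) (by decide +kernel)

def L10 : List (List ℕ) := [[0,10,8,3,13,11,6,16,14,9,19,17,12,1,20,15,4,2,18,7,5],
  [0,13,2,3,16,5,6,19,8,9,1,11,12,4,14,15,7,17,18,10,20],
  [0,7,11,3,10,14,6,13,17,9,16,20,12,19,2,15,1,5,18,4,8],
  [0,3,6,9,2,8,12,15,18,16,10,11,14,5,17,13,4,7,20,19,1],
  [20,19,1,0,3,6,9,2,8,12,15,18,16,10,11,14,5,17,13,4,7],
  [13,4,7,20,19,1,0,3,6,9,2,8,12,15,18,16,10,11,14,5,17],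
  [14,5,17,13,4,7,20,19,1,0,3,6,9,2,8,12,15,18,16,10,11],
  [16,10,11,14,5,17,13,4,7,20,19,1,0,3,6,9,2,8,12,15,18],
  [12,15,18,16,10,11,14,5,17,13,4,7,20,19,1,0,3,6,9,2,8],
  [9,2,8,12,15,18,16,10,11,14,5,17,13,4,7,20,19,1,0,3,6]]

def M10 : List (List ℕ) := []

theorem case10 : IsCycleDecomp (⊤ : SimpleGraph (Fin 21)) 3 7 10 0 :=
  main L10 M10 (by decide +kernel) (by decide +kernel) (by decide +kernel)

end K21

/-- Lemma 3.4: `(K₂₁; C₃^γ, C₇^δ)` exists for `γ ∈ {0,1,3,5,7,8,9,10}` with `γ + δ = 10`. -/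
theorem K21_cycle_decomp (γ δ : ℕ) (hγ : γ ∈ ({0, 1, 3, 5, 7, 8, 9, 10} : Set ℕ))
    (hγδ : γ + δ = 10) :
    IsCycleDecomp (⊤ : SimpleGraph (Fin 21)) 3 7 γ δ := by
  obtain rfl : δ = 10 - γ := by omega
  simp only [Set.mem_insert_iff, Set.mem_singleton_iff] at hγ
  rcases hγ with rfl | rfl | rfl | rfl | rfl | rfl | rfl | rfl
  · exact K21.case0
  · exact K21.case1
  · exact K21.case3
  · exact K21.case5
  · exact K21.case7
  · exact K21.case8
  · exact K21.case9
  · exact K21.case10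
end

section
/- Let t ≥ 0, n = 42t + 21, let α₁, …, α_{3t} ∈ {0, 1, 3, 5, 7} with β_i = 7 − α_i for each i, and let γ ∈ {0, 1, 3, 5, 7, 8, 9, 10} with δ = 10 − γ. Then there exists a decomposition of K_n into (Σ_{i=1}^{3t} α_i) + γ C₃-factors and (Σ_{i=1}^{3t} β_i) + δ C₇-factors; that is, HW(n; Σα_i + γ, Σβ_i + δ; 3, 7) exists. -/
open SimpleGraph

def Dec {P I : Type} (R : P → P → Prop) (k : I → ℕ) (σ : I → P → P) : Prop :=
  (∀ i p, (σ i)^[k i] p = p) ∧ (∀ i p, R p (σ i p)) ∧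
  ∀ p q, R p q → ∃! i, σ i p = q ∨ σ i q = p

def permGraph {V : Type} (f : V → V) : SimpleGraph V where
  Adj x y := x ≠ y ∧ (f x = y ∨ f y = x)
  symm := ⟨fun x y h => ⟨h.1.symm, h.2.symm⟩⟩
  loopless := ⟨fun x h => h.1 rfl⟩

lemma permGraph_factor {V : Type} (f : V → V) (k : ℕ) (hk : k.Prime)
    (hc : ∀ i j : Fin k, ((j - i).val = 1 ↔ (i.val + 1) % k = j.val))
    (h1 : ∀ x, f^[k] x = x) (h2 : ∀ x, f x ≠ x) : IsCycleFactor k (permGraph f) := by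
  have hk0 : 0 < k := hk.pos
  intro c
  induction c using SimpleGraph.ConnectedComponent.ind with | h x
  have hmin : ∀ x, Function.minimalPeriod f x = k := by
    intro x
    have hd : Function.minimalPeriod f x ∣ k := Function.IsPeriodicPt.minimalPeriod_dvd (h1 x)
    rcases (Nat.dvd_prime hk).1 hd with h | h
    · exact absurd (Function.minimalPeriod_eq_one_iff_isFixedPt.1 h) (h2 x)
    · exact h
  have hmod : ∀ j, f^[j % k] x = f^[j] x := by
    intro j
    rw [← hmin x]; exact Function.iterate_mod_minimalPeriod_eq
  have hinj : ∀ i j : ℕ, i < k → j < k → f^[i] x = f^[j] x → i = j := by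
    intro i j hi hj h
    rw [← hmin x] at hi hj
    exact Function.iterate_injOn_Iio_minimalPeriod hi hj h
  have hreach : ∀ j : ℕ, (permGraph f).Reachable x (f^[j] x) := by
    intro j
    induction j with
    | zero => exact SimpleGraph.Reachable.refl _
    | succ j ih =>
      refine ih.trans (SimpleGraph.Adj.reachable ?_)
      rw [Function.iterate_succ_apply']
      exact ⟨(h2 _).symm, Or.inl rfl⟩
  have hsurj : ∀ y, (permGraph f).Reachable x y → ∃ j, f^[j] x = y := by
    intro y hy
    obtain ⟨w⟩ := hy.symm
    clear hmin hmod hinj hreach hy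
    induction w with
    | nil => exact ⟨0, rfl⟩
    | cons ha w ih =>
      obtain ⟨j, hj⟩ := ih
      rcases ha.2 with h | h
      · refine ⟨k - 1 + j, ?_⟩
        rw [Function.iterate_add_apply, hj, ← h, ← Function.iterate_succ_apply,
          Nat.succ_eq_add_one, Nat.sub_add_cancel hk0, h1]
      · refine ⟨j + 1, ?_⟩
        rw [Function.iterate_succ_apply', hj, h]
  let φ : Fin k → ((permGraph f).connectedComponentMk x).supp := fun j =>
    ⟨f^[j.val] x, SimpleGraph.ConnectedComponent.sound (hreach j).symm⟩
  have hφ : Function.Bijective φ := by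
    constructor
    · intro i j h
      exact Fin.ext (hinj _ _ i.2 j.2 (congrArg Subtype.val h))
    · rintro ⟨y, hy⟩
      obtain ⟨j, hj⟩ := hsurj y (SimpleGraph.ConnectedComponent.exact hy).symm
      refine ⟨⟨j % k, Nat.mod_lt _ hk0⟩, Subtype.ext ?_⟩
      show f^[j % k] x = y
      rw [hmod, hj]
  have key : ∀ i j : Fin k, f (f^[i.val] x) = f^[j.val] x ↔ (j - i).val = 1 := by
    intro i j
    rw [hc, ← Function.iterate_succ_apply' f, ← hmod]
    constructor
    · intro h
      exact hinj _ _ (Nat.mod_lt _ hk0) j.2 h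
    · intro h
      rw [Nat.succ_eq_add_one, h]
  refine ⟨SimpleGraph.Iso.symm ⟨Equiv.ofBijective φ hφ, ?_⟩⟩
  intro i j
  show (f^[i.val] x ≠ f^[j.val] x ∧ _) ↔ _
  rw [SimpleGraph.cycleGraph_adj']
  constructor
  · rintro ⟨-, h⟩
    rcases h with h | h
    · exact Or.inr ((key i j).1 h)
    · exact Or.inl ((key j i).1 h)
  · rintro h
    rcases h with h | h
    · have h' := (key j i).2 h
      exact ⟨by rw [← h']; exact h2 _, Or.inr h'⟩
    · have h' := (key i j).2 h
      exact ⟨by rw [← h']; exact (h2 _).symm, Or.inl h'⟩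

lemma final_conv {P I : Type} [Fintype P] [Fintype I] (k : I → ℕ) (hk : ∀ i, k i = 3 ∨ k i = 7)
    (σ : I → P → P) (h : Dec (fun p q => p ≠ q) k σ) (n r s : ℕ) (hn : Fintype.card P = n)
    (hr : Fintype.card {i // k i = 3} = r) (hs : Fintype.card {i // ¬ k i = 3} = s) :
    IsCycleDecomp (⊤ : SimpleGraph (Fin n)) 3 7 r s := by
  classical
  obtain ⟨h1, h2, h3⟩ := h
  let e : Fin n ≃ P := (Fintype.equivFinOfCardEq hn).symm
  let E : Fin r ⊕ Fin s ≃ I :=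
    (Equiv.sumCongr (Fintype.equivFinOfCardEq hr).symm (Fintype.equivFinOfCardEq hs).symm).trans
      (Equiv.sumCompl (fun i => k i = 3))
  have hE1 : ∀ i, k (E (Sum.inl i)) = 3 := fun i => ((Fintype.equivFinOfCardEq hr).symm i).2
  have hE2 : ∀ i, k (E (Sum.inr i)) = 7 := fun i =>
    (hk _).resolve_left ((Fintype.equivFinOfCardEq hs).symm i).2
  let f : I → Fin n → Fin n := fun i x => e.symm (σ i (e x))
  have hf1 : ∀ i x, (f i)^[k i] x = x := by
    intro i x
    have hsc : Function.Semiconj e (f i) (σ i) := fun x => by simp [f]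
    apply e.injective
    rw [(hsc.iterate_right (k i)).eq, h1]
  have hf2 : ∀ i x, f i x ≠ x := by
    intro i x hx
    apply h2 i (e x)
    have := congrArg e hx
    simpa [f] using this.symm
  refine ⟨fun i => permGraph (f (E i)), fun i => le_top, ?_, ?_, ?_⟩
  · intro ed
    induction ed using Sym2.ind with | h x y
    intro hxy
    have hxy' : x ≠ y := by simpa using hxy
    obtain ⟨i, hi, hu⟩ := h3 (e x) (e y) (fun h => hxy' (e.injective h))
    have tr : ∀ j u v, f j u = v ↔ σ j (e u) = e v := by
      intro j u v; simp [f, Equiv.symm_apply_eq]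
    refine ⟨E.symm i, ?_, ?_⟩
    · show x ≠ y ∧ _
      refine ⟨hxy', ?_⟩
      rw [tr, tr, Equiv.apply_symm_apply]
      exact hi
    · intro j hj
      have hj' : x ≠ y ∧ (f (E j) x = y ∨ f (E j) y = x) := hj
      rw [Equiv.eq_symm_apply]
      apply hu
      rw [← tr, ← tr]
      exact hj'.2
  · intro i
    refine permGraph_factor _ 3 (by norm_num) (by decide) ?_ (hf2 _)
    have := hf1 (E (Sum.inl i)); rwa [hE1] at this
  · intro i
    refine permGraph_factor _ 7 (by norm_num) (by decide) ?_ (hf2 _)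
    have := hf1 (E (Sum.inr i)); rwa [hE2] at this

lemma exists_label {P : Type} (σ : P → P) (h1 : ∀ p, σ^[3] p = p) (h2 : ∀ p, p ≠ σ p) :
    ∃ (Q : Type) (E : P ≃ Q × Fin 3), ∀ p, E (σ p) = ((E p).1, (E p).2 + 1) := by
  have h3 : ∀ p, σ (σ (σ p)) = p := h1
  have h4 : ∀ p, p ≠ σ (σ p) := by
    intro p hp
    apply h2 (σ (σ p))
    rw [h3]; exact hp.symm
  let S : Setoid P :=
    { r := fun p q => q = p ∨ q = σ p ∨ q = σ (σ p)
      iseqv := by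
        constructor
        · intro x; exact Or.inl rfl
        · rintro x y (h | h | h) <;> subst h <;> simp [h3]
        · rintro x y z (h | h | h) (h' | h' | h') <;> subst h <;> subst h' <;> simp [h3] }
  let ψ : Quotient S × Fin 3 → P := fun a => σ^[a.2.val] a.1.out
  have hcl : ∀ a, Quotient.mk S (ψ a) = a.1 := by
    rintro ⟨q, i⟩
    have : Quotient.mk S (ψ (q, i)) = Quotient.mk S q.out := by
      apply Quotient.sound
      show _ ∨ _ ∨ _
      fin_cases i <;> simp [ψ, h3]
    rw [this, Quotient.out_eq]
  have hb : Function.Bijective ψ := by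
    constructor
    · rintro ⟨q, i⟩ ⟨q', i'⟩ h
      have hq : q = q' := by
        have := congrArg (Quotient.mk S) h
        rwa [hcl, hcl] at this
      subst hq
      congr 1
      fin_cases i <;> fin_cases i' <;> simp [ψ] at h ⊢
      · exact h2 _ h
      · exact h4 _ h
      · exact h2 _ h.symm
      · exact h2 _ h
      · exact h4 _ h.symm
      · exact h2 _ h.symm
    · intro p
      have : S.r (Quotient.mk S p).out p := Quotient.exact (Quotient.out_eq _)
      rcases this with h | h | h
      · exact ⟨(Quotient.mk S p, 0), h.symm⟩
      · exact ⟨(Quotient.mk S p, 1), h.symm⟩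
      · exact ⟨(Quotient.mk S p, 2), h.symm⟩
  refine ⟨Quotient S, (Equiv.ofBijective ψ hb).symm, ?_⟩
  intro p
  obtain ⟨⟨q, i⟩, rfl⟩ := hb.2 p
  have e1 : ∀ a, (Equiv.ofBijective ψ hb).symm (ψ a) = a := fun a =>
    (Equiv.ofBijective ψ hb).symm_apply_apply a
  rw [e1, Equiv.symm_apply_eq]
  show σ (ψ (q, i)) = ψ (q, i + 1)
  fin_cases i <;> simp [ψ, h3]

lemma label_adj {P Q : Type} (σ : P → P) (E : P ≃ Q × Fin 3)
    (hE : ∀ p, E (σ p) = ((E p).1, (E p).2 + 1)) (p q : P) (hpq : p ≠ q) :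
    (E p).1 = (E q).1 ↔ (σ p = q ∨ σ q = p) := by
  constructor
  · intro h
    have hne : (E p).2 ≠ (E q).2 := by
      intro h'
      exact hpq (E.injective (Prod.ext h h'))
    have : ∀ i j : Fin 3, i ≠ j → i + 1 = j ∨ j + 1 = i := by decide
    rcases this _ _ hne with h' | h'
    · left; apply E.injective; rw [hE, h, h']
    · right; apply E.injective; rw [hE, ← h, h']
  · rintro (h | h)
    · rw [← h, hE]
    · rw [← h, hE]

lemma inflate {P J W : Type} (σ : Option J → P → P) (h : Dec (fun p q => p ≠ q) (fun _ => 3) σ)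
    (A : Option J → Type) (k : ∀ j, A j → ℕ) (τ : ∀ j, A j → Fin 3 × W → Fin 3 × W)
    (hs : ∀ j, Dec (fun p q => p.1 ≠ q.1) (k (some j)) (τ (some j)))
    (hn : Dec (fun p q => p ≠ q) (k none) (τ none)) :
    ∃ ρ : (Σ j, A j) → P × W → P × W, Dec (fun p q => p ≠ q) (fun ja => k ja.1 ja.2) ρ := by
  obtain ⟨h1, h2, h3⟩ := h
  choose Q E hE using fun j => exists_label (σ j) (h1 j) (h2 j)
  let ρ : (Σ j, A j) → P × W → P × W := fun ja u =>
    ((E ja.1).symm ((E ja.1 u.1).1, (τ ja.1 ja.2 ((E ja.1 u.1).2, u.2)).1),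
      (τ ja.1 ja.2 ((E ja.1 u.1).2, u.2)).2)
  have hT : ∀ j a u, (τ j a)^[k j a] u = u := by
    rintro (_ | j) a u
    · exact hn.1 a u
    · exact (hs j).1 a u
  have hN : ∀ j a u, u ≠ τ j a u := by
    rintro (_ | j) a u
    · exact hn.2.1 a u
    · intro hh
      exact (hs j).2.1 a u (congrArg Prod.fst hh)
  have char : ∀ j a p x p' x', ρ ⟨j, a⟩ (p, x) = (p', x') ↔
      (E j p).1 = (E j p').1 ∧ τ j a ((E j p).2, x) = ((E j p').2, x') := by
    intro j a p x p' x'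
    simp only [ρ, Prod.ext_iff, Equiv.symm_apply_eq]
    tauto
  have hρ : ∀ j a n p x, (ρ ⟨j, a⟩)^[n] (p, x) =
      ((E j).symm ((E j p).1, ((τ j a)^[n] ((E j p).2, x)).1), ((τ j a)^[n] ((E j p).2, x)).2) := by
    intro j a n p x
    induction n with
    | zero => simp
    | succ n ih =>
      rw [Function.iterate_succ_apply', ih, Function.iterate_succ_apply']
      simp [ρ]
  refine ⟨ρ, ?_, ?_, ?_⟩
  · rintro ⟨j, a⟩ ⟨p, x⟩
    rw [hρ]
    simp [hT]
  · rintro ⟨j, a⟩ ⟨p, x⟩ hh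
    have := (char j a p x p x).1 hh.symm
    exact hN j a _ this.2.symm
  · rintro ⟨p, x⟩ ⟨p', x'⟩ hne
    by_cases hp : p = p'
    · subst hp
      have hx : x ≠ x' := fun hx => hne (by rw [hx])
      obtain ⟨a, ha, hu⟩ := hn.2.2 ((E none p).2, x) ((E none p).2, x') (by simpa using hx)
      refine ⟨⟨none, a⟩, ?_, ?_⟩
      · simpa only [char, true_and] using ha
      · rintro ⟨(_ | j), b⟩ hb
        · congr 1
          apply hu
          simpa only [char, true_and] using hb
        · exfalso
          simp only [char, true_and] at hb
          rcases hb with hb | hb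
          · exact (hs j).2.1 b ((E (some j) p).2, x) (by rw [hb])
          · exact (hs j).2.1 b ((E (some j) p).2, x') (by rw [hb])
    · obtain ⟨j, hj, hju⟩ := h3 p p' hp
      have hQ := (label_adj (σ j) (E j) (hE j) p p' hp).2 hj
      have h2' : (E j p).2 ≠ (E j p').2 := by
        intro h'
        exact hp ((E j).injective (Prod.ext hQ h'))
      have hex : ∃! a, τ j a ((E j p).2, x) = ((E j p').2, x') ∨
          τ j a ((E j p').2, x') = ((E j p).2, x) := by
        rcases j with _ | j
        · exact hn.2.2 _ _ (fun hh => h2' (congrArg Prod.fst hh))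
        · exact (hs j).2.2 _ _ h2'
      obtain ⟨a, ha, hu⟩ := hex
      refine ⟨⟨j, a⟩, ?_, ?_⟩
      · simp only [char, hQ, true_and]; exact ha
      · rintro ⟨j', b⟩ hb
        have hjj : j' = j := by
          apply hju
          apply (label_adj (σ j') (E j') (hE j') p p' hp).1
          simp only [char] at hb
          rcases hb with hb | hb
          · exact hb.1
          · exact hb.1.symm
        subst hjj
        congr 1
        apply hu
        simpa only [char, hQ, true_and] using hb

lemma Dec.transport {P I P' I' : Type} {k : I → ℕ} {σ : I → P → P}
    (h : Dec (fun p q => p ≠ q) k σ) (e : P' ≃ P) (f : I' ≃ I) :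
    Dec (fun p q => p ≠ q) (fun i => k (f i)) (fun i x => e.symm (σ (f i) (e x))) := by
  obtain ⟨h1, h2, h3⟩ := h
  refine ⟨?_, ?_, ?_⟩
  · intro i x
    have hsc : Function.Semiconj e (fun x => e.symm (σ (f i) (e x))) (σ (f i)) := fun x => by simp
    apply e.injective
    rw [(hsc.iterate_right _).eq, h1]
  · intro i x hx
    apply h2 (f i) (e x)
    have := congrArg e hx
    simpa using this
  · intro p q hpq
    obtain ⟨i, hi, hu⟩ := h3 (e p) (e q) (fun h => hpq (e.injective h))
    refine ⟨f.symm i, ?_, ?_⟩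
    · simp only [Equiv.symm_apply_eq, Equiv.apply_symm_apply]; exact hi
    · intro j hj
      rw [Equiv.eq_symm_apply]
      apply hu
      simpa only [Equiv.symm_apply_eq] using hj

/-- Kirkman triple system of order `6 t + 3` in normal form. -/
def KT (t : ℕ) : Prop :=
  ∃ σ : Option (Fin t × Fin 3) → (Fin t × Fin 6) ⊕ Fin 3 → (Fin t × Fin 6) ⊕ Fin 3,
    Dec (fun p q => p ≠ q) (fun _ => 3) σ ∧ ∀ i, σ none (Sum.inr i) = Sum.inr (i + 1)

lemma KT_of {P I : Type} [Fintype P] [Fintype I] (σ : I → P → P)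
    (h : Dec (fun p q => p ≠ q) (fun _ => 3) σ) (t : ℕ) (hP : Fintype.card P = 6 * t + 3)
    (hI : Fintype.card I = 3 * t + 1) : KT t := by
  classical
  have hP0 : 0 < Fintype.card P := by omega
  have hI0 : 0 < Fintype.card I := by omega
  obtain ⟨p0⟩ := Fintype.card_pos_iff.1 hP0
  obtain ⟨i0⟩ := Fintype.card_pos_iff.1 hI0
  obtain ⟨h1, h2, h3⟩ := id h
  have h3' : ∀ p, σ i0 (σ i0 (σ i0 p)) = p := h1 i0
  let ι : Fin 3 → P := fun j => (σ i0)^[j.val] p0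
  have h4 : p0 ≠ σ i0 (σ i0 p0) := by
    intro hp
    apply h2 i0 (σ i0 (σ i0 p0))
    rw [h3']; exact hp.symm
  have hι : Function.Injective ι := by
    intro i j hij
    fin_cases i <;> fin_cases j <;> simp [ι] at hij ⊢
    · exact h2 _ _ hij
    · exact h4 hij
    · exact h2 _ _ hij.symm
    · exact h2 _ _ hij
    · exact h4 hij.symm
    · exact h2 _ _ hij.symm
  have hc : Fintype.card (Fin t × Fin 6) = Fintype.card ((Set.range ι)ᶜ : Set P) := by
    rw [Fintype.card_compl_set, hP, Set.card_range_of_injective hι]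
    simp; omega
  let e : (Fin t × Fin 6) ⊕ Fin 3 ≃ P :=
    (Equiv.sumCongr (Fintype.equivOfCardEq hc) (Equiv.ofInjective ι hι)).trans
      ((Equiv.sumComm _ _).trans (Equiv.Set.sumCompl (Set.range ι)))
  have he : ∀ i, e (Sum.inr i) = ι i := by intro i; simp [e]
  have hc2 : Fintype.card (Fin t × Fin 3) = Fintype.card {a : I // a ≠ i0} := by
    rw [Fintype.card_subtype_compl, hI, Fintype.card_subtype_eq]
    simp; omega
  let f : Option (Fin t × Fin 3) ≃ I :=
    (Equiv.optionCongr (Fintype.equivOfCardEq hc2)).trans (Equiv.optionSubtypeNe i0)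
  have hf : f none = i0 := by simp [f]
  refine ⟨_, h.transport e f, ?_⟩
  intro i
  rw [Equiv.symm_apply_eq, he, he, hf]
  fin_cases i <;> simp [ι, h3']

lemma rtd_dec (b : ℕ) (hb : Odd b) :
    Dec (P := Fin 3 × ZMod b) (I := ZMod b) (fun p q => p.1 ≠ q.1) (fun _ => 3)
      (fun c p => (p.1 + 1, p.2 + (if p.1 = 2 then -(2 * c) else c))) := by
  have hu : IsUnit (2 : ZMod b) := by
    have := (ZMod.isUnit_iff_coprime 2 b).2 (Nat.coprime_two_left.2 hb)
    simpa using this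
  obtain ⟨w, hw⟩ := hu.exists_right_inv
  have key : ∀ (l : Fin 3) (d : ZMod b), ∃! c : ZMod b, (if l = 2 then -(2 * c) else c) = d := by
    intro l d
    by_cases hl : l = 2
    · simp only [hl, if_true]
      refine ⟨-(w * d), by linear_combination d * hw, ?_⟩
      intro c hc
      linear_combination (-w) * hc - c * hw
    · simp only [hl, if_false]
      exact ⟨d, rfl, fun c hc => hc⟩
  refine ⟨?_, ?_, ?_⟩
  · rintro c ⟨l, x⟩
    fin_cases l <;> simp [Function.iterate_succ_apply, Fin.ext_iff] <;> ring
  · rintro c ⟨l, x⟩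
    simp
  · rintro ⟨l, x⟩ ⟨l', x'⟩ hl
    simp only at hl
    have h3 : ∀ i j : Fin 3, i ≠ j → (i + 1 = j ∧ ¬ j + 1 = i) ∨ (j + 1 = i ∧ ¬ i + 1 = j) := by
      decide
    rcases h3 _ _ hl with ⟨ha, hb⟩ | ⟨ha, hb⟩
    · obtain ⟨c, hc, hcu⟩ := key l (x' - x)
      refine ⟨c, Or.inl (Prod.ext ha ?_), ?_⟩
      · simp only at hc ⊢; rw [hc]; ring
      · rintro c' (h | h)
        · apply hcu
          have := congrArg Prod.snd h
          simp only at this ⊢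
          rw [← this]; ring
        · exact absurd (congrArg Prod.fst h) hb
    · obtain ⟨c, hc, hcu⟩ := key l' (x - x')
      refine ⟨c, Or.inr (Prod.ext ha ?_), ?_⟩
      · simp only at hc ⊢; rw [hc]; ring
      · rintro c' (h | h)
        · exact absurd (congrArg Prod.fst h) hb
        · apply hcu
          have := congrArg Prod.snd h
          simp only at this ⊢
          rw [← this]; ring

def AA (X Y : Type) {J : Type} : Option J → Type
  | none => X
  | some _ => Y

noncomputable instance AA.fintype (X Y J : Type) [Fintype X] [Fintype Y] (j : Option J) :
    Fintype (AA X Y j) :=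
  match j with
  | none => (inferInstance : Fintype X)
  | some _ => (inferInstance : Fintype Y)

lemma card_sigma_AA (X Y J : Type) [Fintype X] [Fintype Y] [Fintype J] :
    Fintype.card (Σ j : Option J, AA X Y j) =
      Fintype.card X + Fintype.card J * Fintype.card Y := by
  rw [Fintype.card_sigma, Fintype.sum_option]
  have h1 : Fintype.card (AA X Y (none : Option J)) = Fintype.card X := rfl
  have h2 : ∀ j : J, Fintype.card (AA X Y (some j)) = Fintype.card Y := fun _ => rfl
  rw [h1, Finset.sum_congr rfl (fun j _ => h2 j)]
  simp

lemma KT_mul (s u t : ℕ) (hs : KT s) (hu : KT u) (ht : t = 2 * s * u + s + u) : KT t := by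
  classical
  obtain ⟨σ, hσ, -⟩ := hs
  obtain ⟨τ, hτ, -⟩ := hu
  let e : Fin 3 × ZMod (2 * u + 1) ≃ (Fin u × Fin 6) ⊕ Fin 3 := Fintype.equivOfCardEq (by
    simp [ZMod.card]; ring)
  have hτ' := hτ.transport e (Equiv.refl _)
  let A : Option (Fin s × Fin 3) → Type := AA (Option (Fin u × Fin 3)) (ZMod (2 * u + 1))
  let T : ∀ j, A j → Fin 3 × ZMod (2 * u + 1) → Fin 3 × ZMod (2 * u + 1) := fun j => match j with
    | none => fun i x => e.symm (τ i (e x))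
    | some _ => fun (c : ZMod (2 * u + 1)) p => (p.1 + 1, p.2 + (if p.1 = 2 then -(2 * c) else c))
  obtain ⟨ρ, hρ⟩ := inflate σ hσ A (fun _ _ => 3) T
    (fun j => rtd_dec (2 * u + 1) ⟨u, rfl⟩) hτ'
  refine KT_of ρ hρ t ?_ ?_
  · simp [ZMod.card]; subst ht; ring
  · rw [card_sigma_AA]
    simp [ZMod.card]
    subst ht; ring

def FrameOn {X : Type} (B : Set X) (φ : X × Fin 3 → X × Fin 6 → X × Fin 6) : Prop :=
  (∀ x j y a, x ∈ B → y ∈ B → y ≠ x → (φ (x, j) (y, a)).1 ∈ B ∧ (φ (x, j) (y, a)).1 ≠ x ∧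
    (φ (x, j) (y, a)).1 ≠ y ∧ φ (x, j) (φ (x, j) (φ (x, j) (y, a))) = (y, a)) ∧
  (∀ y a z c, y ∈ B → z ∈ B → y ≠ z → ∃! i : X × Fin 3, i.1 ∈ B ∧ i.1 ≠ y ∧ i.1 ≠ z ∧
    (φ i (y, a) = (z, c) ∨ φ i (z, c) = (y, a)))

def inP {X : Type} (S : Set X) : (X × Fin 6) ⊕ Fin 3 → Prop
  | Sum.inl p => p.1 ∈ S
  | Sum.inr _ => True

def inI {X : Type} (S : Set X) : Option (X × Fin 3) → Prop
  | none => True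
  | some p => p.1 ∈ S

def KOn {X : Type} (S : Set X)
    (ψ : Option (X × Fin 3) → (X × Fin 6) ⊕ Fin 3 → (X × Fin 6) ⊕ Fin 3) : Prop :=
  (∀ i p, inI S i → inP S p → inP S (ψ i p) ∧ p ≠ ψ i p ∧ ψ i (ψ i (ψ i p)) = p) ∧
  (∀ p q, inP S p → inP S q → p ≠ q → ∃! i, inI S i ∧ (ψ i p = q ∨ ψ i q = p)) ∧
  (∀ i, ψ none (Sum.inr i) = Sum.inr (i + 1))

lemma FrameOn.transport {X X' : Type} {B : Set X} {φ : X' × Fin 3 → X' × Fin 6 → X' × Fin 6}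
    (h : FrameOn (Set.univ : Set X') φ) (e : B ≃ X') : ∃ φ', FrameOn B φ' := by
  classical
  obtain ⟨h1, h2⟩ := h
  let φ' : X × Fin 3 → X × Fin 6 → X × Fin 6 := fun i p =>
    if hx : i.1 ∈ B then if hy : p.1 ∈ B then
      ((e.symm (φ (e ⟨i.1, hx⟩, i.2) (e ⟨p.1, hy⟩, p.2)).1).val,
        (φ (e ⟨i.1, hx⟩, i.2) (e ⟨p.1, hy⟩, p.2)).2) else p else p
  have ev : ∀ (x y : B) j a, φ' (x.val, j) (y.val, a) =
      ((e.symm (φ (e x, j) (e y, a)).1).val, (φ (e x, j) (e y, a)).2) := by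
    intro x y j a
    simp [φ']
  have ev2 : ∀ (x y z : B) j a c, φ' (x.val, j) (y.val, a) = (z.val, c) ↔
      φ (e x, j) (e y, a) = (e z, c) := by
    intro x y z j a c
    rw [ev, Prod.ext_iff, Prod.ext_iff]
    simp only [Subtype.val_inj, Equiv.symm_apply_eq]
  refine ⟨φ', ?_, ?_⟩
  · intro x j y a hx hy hne
    have hne' : e ⟨y, hy⟩ ≠ e ⟨x, hx⟩ := fun hh => hne (congrArg Subtype.val (e.injective hh))
    obtain ⟨-, a2, a3, a4⟩ := h1 (e ⟨x, hx⟩) j (e ⟨y, hy⟩) a trivial trivial hne'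
    have e1 := ev ⟨x, hx⟩ ⟨y, hy⟩ j a
    simp only at e1
    rw [e1]
    refine ⟨Subtype.coe_prop _, ?_, ?_, ?_⟩
    · intro hh
      apply a2
      rw [← Equiv.symm_apply_eq]
      exact Subtype.ext hh
    · intro hh
      apply a3
      rw [← Equiv.symm_apply_eq]
      exact Subtype.ext hh
    · rw [ev ⟨x, hx⟩, ev ⟨x, hx⟩]
      simp [a4]
  · intro y a z c hy hz hne
    have hne' : e ⟨y, hy⟩ ≠ e ⟨z, hz⟩ := fun hh => hne (congrArg Subtype.val (e.injective hh))
    obtain ⟨⟨x, j⟩, ⟨-, b1, b2, b3⟩, hu⟩ := h2 (e ⟨y, hy⟩) a (e ⟨z, hz⟩) c trivial trivial hne'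
    refine ⟨((e.symm x).val, j), ⟨Subtype.coe_prop _, ?_, ?_, ?_⟩, ?_⟩
    · intro hh
      apply b1
      show x = _
      rw [← Equiv.symm_apply_eq]
      exact Subtype.ext hh
    · intro hh
      apply b2
      show x = _
      rw [← Equiv.symm_apply_eq]
      exact Subtype.ext hh
    · have := ev2 (e.symm x) ⟨y, hy⟩ ⟨z, hz⟩ j a c
      have t2 := ev2 (e.symm x) ⟨z, hz⟩ ⟨y, hy⟩ j c a
      simp only [Equiv.apply_symm_apply] at this t2
      rw [this, t2]
      exact b3
    · rintro ⟨x', j'⟩ ⟨c0, c1, c2, c3⟩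
      simp only at c0 c1 c2
      have := hu (e ⟨x', c0⟩, j') ⟨trivial, ?_, ?_, ?_⟩
      · rw [Prod.ext_iff] at this
        simp only at this
        refine Prod.ext ?_ this.2
        simp only
        rw [← this.1]; simp
      · exact fun hh => c1 (congrArg Subtype.val (e.injective hh))
      · exact fun hh => c2 (congrArg Subtype.val (e.injective hh))
      · have t1 := ev2 ⟨x', c0⟩ ⟨y, hy⟩ ⟨z, hz⟩ j' a c
        have t2 := ev2 ⟨x', c0⟩ ⟨z, hz⟩ ⟨y, hy⟩ j' c a
        rw [← t1, ← t2]
        exact c3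

lemma KOn.of_KT {X : Type} (S : Set X) (t : ℕ) (e : S ≃ Fin t) (h : KT t) : ∃ ψ, KOn S ψ := by
  classical
  obtain ⟨σ, ⟨h1, h2, h3⟩, h4⟩ := h
  have h1' : ∀ i p, σ i (σ i (σ i p)) = p := h1
  let toP : (X × Fin 6) ⊕ Fin 3 → (Fin t × Fin 6) ⊕ Fin 3 := fun p => match p with
    | Sum.inl p => if h : p.1 ∈ S then Sum.inl (e ⟨p.1, h⟩, p.2) else Sum.inr 0
    | Sum.inr i => Sum.inr i
  let frP : (Fin t × Fin 6) ⊕ Fin 3 → (X × Fin 6) ⊕ Fin 3 := fun p => match p with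
    | Sum.inl p => Sum.inl ((e.symm p.1).val, p.2)
    | Sum.inr i => Sum.inr i
  let toI : Option (X × Fin 3) → Option (Fin t × Fin 3) := fun p => match p with
    | none => none
    | some p => if h : p.1 ∈ S then some (e ⟨p.1, h⟩, p.2) else none
  let frI : Option (Fin t × Fin 3) → Option (X × Fin 3) := fun p => match p with
    | none => none
    | some p => some ((e.symm p.1).val, p.2)
  have tf : ∀ p, toP (frP p) = p := by
    rintro (⟨p, a⟩ | i) <;> simp [toP, frP]
  have ft : ∀ p, inP S p → frP (toP p) = p := by
    rintro (⟨p, a⟩ | i) hp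
    · have hp' : p ∈ S := hp
      simp [toP, frP, hp']
    · rfl
  have tfI : ∀ p, toI (frI p) = p := by
    rintro (_ | ⟨p, a⟩) <;> simp [toI, frI]
  have ftI : ∀ p, inI S p → frI (toI p) = p := by
    rintro (_ | ⟨p, a⟩) hp
    · rfl
    · have hp' : p ∈ S := hp
      simp [toI, frI, hp']
  have fin : ∀ p, inP S (frP p) := by
    rintro (⟨p, a⟩ | i)
    · exact Subtype.coe_prop _
    · trivial
  have finI : ∀ p, inI S (frI p) := by
    rintro (_ | ⟨p, a⟩)
    · trivial
    · exact Subtype.coe_prop _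
  have ch : ∀ i p q, inP S q → (frP (σ i p) = q ↔ σ i p = toP q) := by
    intro i p q hq
    constructor
    · intro h; rw [← h, tf]
    · intro h; rw [h, ft q hq]
  refine ⟨fun i p => frP (σ (toI i) (toP p)), ?_, ?_, ?_⟩
  · intro i p hi hp
    refine ⟨fin _, ?_, ?_⟩
    · intro hh
      exact h2 (toI i) (toP p) ((ch _ _ _ hp).1 hh.symm).symm
    · simp only [tf, h1', ft p hp]
  · intro p q hp hq hne
    have hne' : toP p ≠ toP q := by
      intro hh
      apply hne
      rw [← ft p hp, hh, ft q hq]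
    obtain ⟨i, hi, hu⟩ := h3 _ _ hne'
    refine ⟨frI i, ⟨finI i, ?_⟩, ?_⟩
    · simp only [tfI]
      rw [ch _ _ _ hq, ch _ _ _ hp]
      exact hi
    · rintro j ⟨hj, hj2⟩
      rw [← ftI j hj]
      congr 1
      apply hu
      show _ ∨ _
      rwa [← ch _ _ _ hq, ← ch _ _ _ hp]
  · intro i
    show frP (σ none (Sum.inr i)) = _
    rw [h4]

lemma KT_of_KOn {X : Type} [Fintype X]
    (ψ : Option (X × Fin 3) → (X × Fin 6) ⊕ Fin 3 → (X × Fin 6) ⊕ Fin 3)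
    (h : KOn Set.univ ψ) : KT (Fintype.card X) := by
  have hP : ∀ p : (X × Fin 6) ⊕ Fin 3, inP Set.univ p := by
    rintro (p | i) <;> trivial
  have hI : ∀ p : Option (X × Fin 3), inI Set.univ p := by
    rintro (_ | i) <;> trivial
  refine KT_of ψ ⟨?_, ?_, ?_⟩ _ ?_ ?_
  · intro i p
    exact (h.1 i p (hI _) (hP _)).2.2
  · intro i p
    exact (h.1 i p (hI _) (hP _)).2.1
  · intro p q hpq
    have := h.2.1 p q (hP _) (hP _) hpq
    simpa only [hI, true_and] using this
  · simp; ring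
  · simp; ring

lemma gdd_KT {X Y : Type} [Fintype X] [Nonempty X] (g : X → Y) (β : X → X → Set X)
    (b1 : ∀ x y, g x ≠ g y → x ∈ β x y ∧ y ∈ β x y)
    (b2 : ∀ x y u v, g x ≠ g y → u ∈ β x y → v ∈ β x y → u ≠ v → g u ≠ g v ∧ β u v = β x y)
    (b3 : ∀ x y, g x ≠ g y → ∃ φ, FrameOn (β x y) φ)
    (b4 : ∀ y, ∃ ψ, KOn {x | g x = y} ψ) : KT (Fintype.card X) := by
  classical
  let Φ : Set X → X × Fin 3 → X × Fin 6 → X × Fin 6 := fun B =>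
    if h : ∃ φ, FrameOn B φ then h.choose else fun _ p => p
  have hΦ : ∀ x y, g x ≠ g y → FrameOn (β x y) (Φ (β x y)) := by
    intro x y hxy
    simp only [Φ, b3 x y hxy, dif_pos]
    exact (b3 x y hxy).choose_spec
  choose Ψ hΨ using b4
  let θ : Option (X × Fin 3) → (X × Fin 6) ⊕ Fin 3 → (X × Fin 6) ⊕ Fin 3 := fun i p =>
    match i, p with
    | none, Sum.inl p => Ψ (g p.1) none (Sum.inl p)
    | none, Sum.inr i => Sum.inr (i + 1)
    | some i, Sum.inl p => if g p.1 = g i.1 then Ψ (g i.1) (some i) (Sum.inl p)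
        else Sum.inl (Φ (β i.1 p.1) i p)
    | some i, Sum.inr k => Ψ (g i.1) (some i) (Sum.inr k)
  have agree : ∀ y i p, inI {x | g x = y} i → inP {x | g x = y} p → θ i p = Ψ y i p := by
    rintro y (_ | ⟨x, j⟩) (⟨z, a⟩ | k) hi hp
    · have hp' : g z = y := hp
      subst hp'; rfl
    · exact ((hΨ y).2.2 k).symm
    · have hp' : g z = y := hp
      have hi' : g x = y := hi
      subst hp'
      simp [θ, hi']
    · have hi' : g x = y := hi
      subst hi'; rfl
  have agreeF : ∀ s t, g s ≠ g t → ∀ u v j a, u ∈ β s t → v ∈ β s t → u ≠ v →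
      θ (some (u, j)) (Sum.inl (v, a)) = Sum.inl (Φ (β s t) (u, j) (v, a)) := by
    intro s t hst u v j a hu hv huv
    obtain ⟨c1, c2⟩ := b2 s t u v hst hu hv huv
    simp [θ, c1.symm, c2]
  -- a step of a class outside the group
  have out : ∀ x j y a, g y ≠ g x → ∃ z c, θ (some (x, j)) (Sum.inl (y, a)) = Sum.inl (z, c) ∧
      z ∈ β x y ∧ z ≠ x ∧ z ≠ y ∧ g z ≠ g y ∧ g z ≠ g x ∧
      θ (some (x, j)) (θ (some (x, j)) (Sum.inl (z, c))) = Sum.inl (y, a) := by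
    intro x j y a hyx
    have hxy : g x ≠ g y := hyx.symm
    obtain ⟨m1, m2⟩ := b1 x y hxy
    have hne : y ≠ x := fun hh => hyx (by rw [hh])
    have hF := (hΦ x y hxy).1
    obtain ⟨d1, d2, d3, d4⟩ := hF x j y a m1 m2 hne
    have e1 := agreeF x y hxy x y j a m1 m2 hne.symm
    obtain ⟨f1, f2, f3, f4⟩ := hF x j (Φ (β x y) (x, j) (y, a)).1 (Φ (β x y) (x, j) (y, a)).2
      m1 d1 d2
    refine ⟨(Φ (β x y) (x, j) (y, a)).1, (Φ (β x y) (x, j) (y, a)).2, e1, d1, d2, d3, ?_, ?_, ?_⟩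
    · exact (b2 x y _ _ hxy d1 m2 d3).1
    · exact (b2 x y _ _ hxy d1 m1 d2).1
    · rw [agreeF x y hxy x _ j _ m1 d1 d2.symm]
      have : Φ (β x y) (x, j) ((Φ (β x y) (x, j) (y, a)).1, (Φ (β x y) (x, j) (y, a)).2) =
        ((Φ (β x y) (x, j) (Φ (β x y) (x, j) (y, a))).1,
          (Φ (β x y) (x, j) (Φ (β x y) (x, j) (y, a))).2) := rfl
      rw [this, agreeF x y hxy x _ j _ m1 f1 f2.symm]
      rw [← this]
      exact congrArg Sum.inl d4
  -- uniqueness inside groups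
  have uniqA : ∀ y p q i, inP {x | g x = y} p → inP {x | g x = y} q → θ i p = q →
      inI {x | g x = y} i := by
    rintro y p q (_ | ⟨x, j⟩) hp hq hθ
    · trivial
    · by_contra hx
      have hx : g x ≠ y := hx
      rcases p with ⟨z, a⟩ | k
      · have hz : g z = y := hp
        obtain ⟨w, c, e1, e2, e3, e4, e5, -⟩ := out x j z a (by rw [hz]; exact hx.symm)
        rw [e1] at hθ
        subst hθ
        have hq' : g w = y := hq
        exact e5 (by rw [hq', hz])
      · have hag := agree (g x) (some (x, j)) (Sum.inr k) rfl trivial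
        obtain ⟨t1, t2, t3⟩ := (hΨ (g x)).1 (some (x, j)) (Sum.inr k) rfl trivial
        rw [← hag, hθ] at t1
        rcases q with ⟨w, c⟩ | l
        · have hw : g w = y := hq
          have hw' : g w = g x := t1
          exact hx (by rw [← hw', hw])
        · have hkl : k ≠ l := by
            intro hh
            rw [← hag, hθ, hh] at t2
            exact t2 rfl
          have hkl2 : k + 1 = l ∨ l + 1 = k := by
            have h3 : ∀ k l : Fin 3, k ≠ l → k + 1 = l ∨ l + 1 = k := by decide
            exact h3 _ _ hkl
          obtain ⟨i0, -, hu⟩ := (hΨ (g x)).2.1 (Sum.inr k) (Sum.inr l) trivial trivial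
            (by simpa using hkl)
          have u1 := hu (some (x, j)) ⟨rfl, Or.inl (by rw [← hag, hθ])⟩
          have u2 := hu none ⟨trivial, by rw [(hΨ (g x)).2.2, (hΨ (g x)).2.2]; simpa using hkl2⟩
          rw [← u2] at u1
          cases u1
  have uniqB : ∀ y a z c i, g y ≠ g z → θ i (Sum.inl (y, a)) = Sum.inl (z, c) →
      ∃ x j, i = some (x, j) ∧ x ∈ β y z ∧ x ≠ y ∧ x ≠ z := by
    rintro y a z c i hyz hθ
    by_cases hi : inI {x | g x = g y} i
    · exfalso
      have hag := agree (g y) i (Sum.inl (y, a)) hi rfl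
      obtain ⟨t1, -⟩ := (hΨ (g y)).1 i (Sum.inl (y, a)) hi rfl
      rw [← hag, hθ] at t1
      have : g z = g y := t1
      exact hyz this.symm
    · rcases i with _ | ⟨x, j⟩
      · exact absurd trivial hi
      · have hx : g x ≠ g y := hi
        obtain ⟨w, d, e1, e2, e3, e4, e5, -⟩ := out x j y a hx.symm
        rw [e1] at hθ
        obtain ⟨rfl, rfl⟩ : w = z ∧ d = c := by simpa using hθ
        obtain ⟨m1, m2⟩ := b1 x y hx
        have := (b2 x y y w hx m2 e2 e4.symm).2
        refine ⟨x, j, rfl, ?_, ?_, e3.symm⟩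
        · rw [this]; exact m1
        · intro hh; exact hx (by rw [hh])
  have caseA : ∀ y p q, inP {x | g x = y} p → inP {x | g x = y} q → p ≠ q →
      ∃! i, θ i p = q ∨ θ i q = p := by
    intro y p q hp hq hne
    obtain ⟨i, ⟨hi, hi2⟩, hu⟩ := (hΨ y).2.1 p q hp hq hne
    refine ⟨i, ?_, ?_⟩
    · simp only
      rw [agree y i p hi hp, agree y i q hi hq]; exact hi2
    · intro i' hi'
      have hin : inI {x | g x = y} i' := by
        rcases hi' with h | h
        · exact uniqA y p q i' hp hq h
        · exact uniqA y q p i' hq hp h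
      apply hu
      refine ⟨hin, ?_⟩
      rw [← agree y i' p hin hp, ← agree y i' q hin hq]; exact hi'
  refine KT_of_KOn θ ⟨?_, ?_, fun _ => rfl⟩
  · intro i p _ _
    refine ⟨by rcases θ i p with _ | _ <;> trivial, ?_⟩
    have good : ∀ y, inI {x | g x = y} i → inP {x | g x = y} p → p ≠ θ i p ∧
        θ i (θ i (θ i p)) = p := by
      intro y hi hp
      obtain ⟨t1, t2, t3⟩ := (hΨ y).1 i p hi hp
      obtain ⟨s1, -, -⟩ := (hΨ y).1 i _ hi t1
      rw [agree y i p hi hp, agree y i _ hi t1, agree y i _ hi s1]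
      exact ⟨t2, t3⟩
    rcases i with _ | ⟨x, j⟩
    · rcases p with ⟨z, a⟩ | k
      · exact good (g z) trivial rfl
      · exact good (g (Classical.arbitrary X)) trivial trivial
    · rcases p with ⟨z, a⟩ | k
      · by_cases hz : g z = g x
        · exact good (g x) rfl hz
        · obtain ⟨w, c, e1, e2, e3, e4, e5, e6, e7⟩ := out x j z a hz
          rw [e1]
          refine ⟨?_, e7⟩
          intro hh
          have : z = w ∧ a = c := by simpa using hh
          exact e4 this.1.symm
      · exact good (g x) rfl trivial
  · intro p q _ _ hne
    have hU : ∀ i : Option (X × Fin 3), inI Set.univ i := by rintro (_ | _) <;> trivial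
    simp only [hU, true_and]
    rcases p with ⟨y, a⟩ | k
    · rcases q with ⟨z, c⟩ | l
      · by_cases hg : g y = g z
        · exact caseA (g z) _ _ hg rfl hne
        · have hyz : y ≠ z := fun hh => hg (by rw [hh])
          obtain ⟨m1, m2⟩ := b1 y z hg
          obtain ⟨⟨x, j⟩, ⟨x1, x2, x3, x4⟩, hu⟩ := (hΦ y z hg).2 y a z c m1 m2 hyz
          simp only at x1 x2 x3
          refine ⟨some (x, j), ?_, ?_⟩
          · simp only
            rw [agreeF y z hg x y j a x1 m1 x2, agreeF y z hg x z j c x1 m2 x3]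
            simpa using x4
          · intro i' hi'
            have : ∃ x j, i' = some (x, j) ∧ x ∈ β y z ∧ x ≠ y ∧ x ≠ z := by
              rcases hi' with h | h
              · exact uniqB y a z c i' hg h
              · obtain ⟨x', j', r1, r2, r3, r4⟩ := uniqB z c y a i' (Ne.symm hg) h
                refine ⟨x', j', r1, ?_, r4, r3⟩
                rw [(b2 z y y z (Ne.symm hg) (b1 z y (Ne.symm hg)).2
                  (b1 z y (Ne.symm hg)).1 hyz).2]
                exact r2
            obtain ⟨x', j', rfl, r2, r3, r4⟩ := this
            congr 1
            apply hu
            refine ⟨r2, r3, r4, ?_⟩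
            rw [agreeF y z hg x' y j' a r2 m1 r3, agreeF y z hg x' z j' c r2 m2 r4] at hi'
            simpa using hi'
      · exact caseA (g y) _ _ rfl trivial hne
    · rcases q with ⟨z, c⟩ | l
      · exact caseA (g z) _ _ trivial rfl hne
      · exact caseA (g (Classical.arbitrary X)) _ _ trivial trivial hne

lemma Dec_of_uni {P I : Type} {R : P → P → Prop} {k : I → ℕ} {σ : I → P → P}
    (h1 : ∀ i p, (σ i)^[k i] p = p) (h2 : ∀ i p, R p (σ i p))
    (h3 : ∀ p q, R p q → ∃ i, σ i p = q ∨ σ i q = p)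
    (h4 : ∀ p i j, i ≠ j → σ i p ≠ σ j p ∧ σ i (σ j p) ≠ p) : Dec R k σ := by
  refine ⟨h1, h2, ?_⟩
  intro p q hpq
  obtain ⟨i, hi⟩ := h3 p q hpq
  refine ⟨i, hi, ?_⟩
  intro j hj
  by_contra hne
  rcases hi with hi | hi <;> rcases hj with hj | hj
  · exact (h4 p j i hne).1 (hj.trans hi.symm)
  · exact (h4 p j i hne).2 (by rw [hi, hj])
  · exact (h4 q j i hne).2 (by rw [hi, hj])
  · exact (h4 q j i hne).1 (hj.trans hi.symm)

def cycS {G h : Type} [Add G] [Sub G] (τ : G → Fin 3 → G × Fin 3) (ω : h → Fin 3 → G) :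
    G ⊕ h → G × Fin 3 → G × Fin 3
  | Sum.inl c, p => ((τ (p.1 - c) p.2).1 + c, (τ (p.1 - c) p.2).2)
  | Sum.inr s, p => (p.1 + ω s p.2, p.2 + 1)

lemma cyc_dec {G h : Type} [AddCommGroup G] (τ : G → Fin 3 → G × Fin 3) (ω : h → Fin 3 → G)
    (h1 : ∀ x l, τ (τ (τ x l).1 (τ x l).2).1 (τ (τ x l).1 (τ x l).2).2 = (x, l))
    (h2 : ∀ x l, τ x l ≠ (x, l)) (h3 : ∀ s, ω s 0 + ω s 1 + ω s 2 = 0)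
    (h4 : ∀ l d m, ((0 : G), l) ≠ (d, m) →
      ∃ i, cycS τ ω i (0, l) = (d, m) ∨ cycS τ ω i (d, m) = (0, l))
    (h5 : ∀ l i j, i ≠ j → cycS τ ω i (0, l) ≠ cycS τ ω j (0, l) ∧
      cycS τ ω i (cycS τ ω j (0, l)) ≠ (0, l)) :
    Dec (fun p q => p ≠ q) (fun _ => 3) (cycS τ ω) := by
  let sh : G → G ⊕ h → G ⊕ h := fun g i => Sum.map (fun c => c + g) id i
  have key : ∀ i g x l, cycS τ ω i (x + g, l) =
      ((cycS τ ω (sh (-g) i) (x, l)).1 + g, (cycS τ ω (sh (-g) i) (x, l)).2) := by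
    rintro (c | s) g x l
    · simp only [cycS, sh, Sum.map_inl]
      have e1 : x + g - c = x - (c + -g) := by abel
      rw [e1]
      refine Prod.ext ?_ rfl
      simp only
      abel
    · simp only [cycS, sh, Sum.map_inr]
      refine Prod.ext ?_ rfl
      simp only [id]
      abel
  have key0 : ∀ i x l, cycS τ ω i (x, l) =
      ((cycS τ ω (sh (-x) i) (0, l)).1 + x, (cycS τ ω (sh (-x) i) (0, l)).2) := by
    intro i x l
    rw [← key, zero_add]
  have shinj : ∀ g i j, sh g i = sh g j → i = j := by
    rintro g (c | s) (c' | s') hh <;> simp only [sh, Sum.map_inl, Sum.map_inr, Sum.inl.injEq, reduceCtorEq, add_left_inj, id] at hh ⊢ <;> exact hh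
  apply Dec_of_uni
  · rintro (c | s) ⟨x, l⟩
    · have := h1 (x - c) l
      simp only [Function.iterate_succ, Function.iterate_zero, Function.comp, id, cycS,
        add_sub_cancel_right]
      rw [this]
      simp
    · have := h3 s
      have hs : ω s l + ω s (l + 1) + ω s (l + 1 + 1) = 0 := by
        fin_cases l
        · exact this
        · rw [← this]; simp only [Fin.mk_one, Fin.reduceFinMk, Fin.isValue, Fin.reduceAdd]; abel
        · rw [← this]; simp only [Fin.mk_one, Fin.reduceFinMk, Fin.isValue, Fin.reduceAdd]; abel
      simp only [Function.iterate_succ, Function.iterate_zero, Function.comp, id, cycS]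
      refine Prod.ext ?_ ?_
      · simp only
        rw [add_assoc, add_assoc, ← add_assoc (ω s l), hs, add_zero]
      · simp only
        have : ∀ l : Fin 3, l + 1 + 1 + 1 = l := by decide
        exact this l
  · rintro (c | s) ⟨x, l⟩ hh
    · have := h2 (x - c) l
      apply this
      simp only [cycS, Prod.ext_iff] at hh
      refine Prod.ext ?_ hh.2.symm
      simp only
      exact eq_sub_of_add_eq hh.1.symm
    · simp only [cycS, Prod.ext_iff] at hh
      have : ∀ l : Fin 3, l ≠ l + 1 := by decide
      exact this l hh.2
  · rintro ⟨x, l⟩ ⟨y, m⟩ hne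
    obtain ⟨i, hi⟩ := h4 l (y - x) m (by
      intro hh
      apply hne
      simp only [Prod.ext_iff] at hh ⊢
      exact ⟨(sub_eq_zero.1 hh.1.symm).symm, hh.2⟩)
    refine ⟨sh x i, ?_⟩
    have e1 : sh (-x) (sh x i) = i := by
      rcases i with c | s <;> simp [sh]
    have k1 := key (sh x i) x 0 l
    have k2 := key (sh x i) x (y - x) m
    rw [e1] at k1 k2
    rw [zero_add] at k1
    rw [sub_add_cancel] at k2
    rw [k1, k2]
    rcases hi with hi | hi
    · left; rw [hi]; simp
    · right; rw [hi]; simp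
  · rintro ⟨x, l⟩ i j hne
    have hh := h5 l (sh (-x) i) (sh (-x) j) (fun e => hne (shinj _ _ _ e))
    rw [key0 j x l, key i x, key0 i x l]
    constructor
    · intro e
      apply hh.1
      simp only [Prod.ext_iff] at e ⊢
      exact ⟨add_right_cancel e.1, e.2⟩
    · intro e
      apply hh.2
      simp only [Prod.ext_iff] at e ⊢
      refine ⟨add_eq_right.1 e.1, e.2⟩

def tabT (m N : ℕ) [NeZero m] (x : Fin m) (l : Fin 3) : Fin m × Fin 3 :=
  (Fin.ofNat m (N / 256 ^ (x.val + m * l.val) % 64),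
    Fin.ofNat 3 (N / 256 ^ (x.val + m * l.val) / 64 % 4))

def tabO (m h O : ℕ) [NeZero m] (s : Fin h) (l : Fin 3) : Fin m :=
  Fin.ofNat m (O / 64 ^ (3 * s.val + l.val) % 64)

def cycF (m h N O : ℕ) [NeZero m] : Fin m ⊕ Fin h → Fin m × Fin 3 → Fin m × Fin 3 :=
  cycS (tabT m N) (tabO m h O)

lemma cyc_KT (m t N O : ℕ) [NeZero m] (hm : m = 2 * t + 1)
    (h1 : ∀ x l, tabT m N (tabT m N (tabT m N x l).1 (tabT m N x l).2).1
      (tabT m N (tabT m N x l).1 (tabT m N x l).2).2 = (x, l) ∧ tabT m N x l ≠ (x, l))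
    (h3 : ∀ s, tabO m t O s 0 + tabO m t O s 1 + tabO m t O s 2 = 0)
    (h4 : ∀ l d k, ((0 : Fin m), l) ≠ (d, k) →
      (∃ i, cycF m t N O (Sum.inl i) (0, l) = (d, k) ∨ cycF m t N O (Sum.inl i) (d, k) = (0, l)) ∨
      (∃ i, cycF m t N O (Sum.inr i) (0, l) = (d, k) ∨ cycF m t N O (Sum.inr i) (d, k) = (0, l)))
    (h5 : ∀ l i j, i ≠ j → cycF m t N O (Sum.inl i) (0, l) ≠ cycF m t N O (Sum.inl j) (0, l) ∧
      cycF m t N O (Sum.inl i) (cycF m t N O (Sum.inl j) (0, l)) ≠ (0, l))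
    (h6 : ∀ l i j, cycF m t N O (Sum.inl i) (0, l) ≠ cycF m t N O (Sum.inr j) (0, l) ∧
      cycF m t N O (Sum.inl i) (cycF m t N O (Sum.inr j) (0, l)) ≠ (0, l) ∧
      cycF m t N O (Sum.inr j) (cycF m t N O (Sum.inl i) (0, l)) ≠ (0, l))
    (h7 : ∀ l i j, i ≠ j → cycF m t N O (Sum.inr i) (0, l) ≠ cycF m t N O (Sum.inr j) (0, l) ∧
      cycF m t N O (Sum.inr i) (cycF m t N O (Sum.inr j) (0, l)) ≠ (0, l)) : KT t := by
  refine KT_of (cycF m t N O) (cyc_dec _ _ (fun x l => (h1 x l).1) (fun x l => (h1 x l).2) h3 ?_ ?_)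
    t ?_ ?_
  · intro l d k hne
    rcases h4 l d k hne with ⟨i, hi⟩ | ⟨i, hi⟩
    exacts [⟨_, hi⟩, ⟨_, hi⟩]
  · rintro l (i | i) (j | j) hne
    · exact h5 l i j (fun e => hne (by rw [e]))
    · exact ⟨(h6 l i j).1, (h6 l i j).2.1⟩
    · exact ⟨(h6 l j i).1.symm, (h6 l j i).2.2⟩
    · exact h7 l i j (fun e => hne (by rw [e]))
  · simp; omega
  · simp; omega

lemma KT_3 : KT 3 :=
  cyc_KT 7 3 0x838603850506004346814584828044410142040240
    0x4184083081141 rfl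
    (by decide +kernel) (by decide +kernel) (by decide +kernel) (by decide +kernel)
    (by decide +kernel) (by decide +kernel)

lemma KT_5 : KT 5 :=
  cyc_KT 11 5 0x810506098a8845844786008242494a03834601488980870a430285410744040840
    0x51ca20524a108102146044 rfl
    (by decide +kernel) (by decide +kernel) (by decide +kernel) (by decide +kernel)
    (by decide +kernel) (by decide +kernel)

lemma KT_6 : KT 6 :=
  cyc_KT 13 6 0x90483418a4587894788078b008448024b494c01864a0646858043828c0a030b0c088105444240
    0x8c3042cb20924c1c70461870c3 rfl
    (by decide +kernel) (by decide +kernel) (by decide +kernel) (by decide +kernel)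
    (by decide +kernel) (by decide +kernel)

lemma KT_8 : KT 8 :=
  cyc_KT 17 8 0x47888245040c8e8f8941050246868a90004d500a4f01840b8d87814b49064e4a48808b44080e104243850d8c0f83074c090340
    0x18e38834d28c3031c71c514b0c334208f041 rfl
    (by decide +kernel) (by decide +kernel) (by decide +kernel) (by decide +kernel)
    (by decide +kernel) (by decide +kernel)

lemma KT_9 : KT 9 :=
  cyc_KT 19 9 0x858a8f8c05929006880291090e8d031011040044524884828649818945468b504c518e838780014e42084d0c070f12410b0d47434b4f4a0a40
    0x938f1023460ca4101851494511013c32cd387282 rfl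
    (by decide +kernel) (by decide +kernel) (by decide +kernel) (by decide +kernel)
    (by decide +kernel) (by decide +kernel)

lemma KT_11 : KT 11 :=
  cyc_KT 23 11 0x83508a9408038b960b900e8d93914106150c958f465400118155454b8684530f52824d8788010a4c4f8c4e56498009518e924742164344850d14121013024a480789040540
    0x455529248c4513904103cf48e38328a14924b1864c2095041 rfl
    (by decide +kernel) (by decide +kernel) (by decide +kernel) (by decide +kernel)
    (by decide +kernel) (by decide +kernel)

lemma KT_18 : KT 18 :=
  cyc_KT 37 18 0x994e54428a9197a3119c15239a855f162083815d1f1896840e951c1d8d4f939e88861219008c5c4553878e4c9f22898f21a14759075248a2550a609d571a909401614d6246495058828006a463564a4b025ba0175e925a098b98051e419b0b0d64032408431b10510c04140f134440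
    0x3a071f4997585452184d780d1920c76c48a47a12e36cc5a44112c95d18868e12161d979354335c105 rfl
    (by decide +kernel) (by decide +kernel) (by decide +kernel) (by decide +kernel)
    (by decide +kernel) (by decide +kernel)

def tabF (m n N : ℕ) [NeZero m] (i : Fin n) (p : Fin m) : Fin m :=
  Fin.ofNat m (N / 16 ^ (m * i.val + p.val) % 16)

lemma tab_KT (t m n N : ℕ) [NeZero m] (hm : m = 6 * t + 3) (hn : n = 3 * t + 1)
    (h1 : ∀ i p, tabF m n N i (tabF m n N i (tabF m n N i p)) = p ∧ p ≠ tabF m n N i p)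
    (h3 : ∀ p q, p ≠ q → ∃ i, tabF m n N i p = q ∨ tabF m n N i q = p)
    (h4 : ∀ p i j, i ≠ j → tabF m n N i p ≠ tabF m n N j p ∧
      tabF m n N i (tabF m n N j p) ≠ p) : KT t :=
  KT_of (tabF m n N) (Dec_of_uni (fun i p => (h1 i p).1) (fun i p => (h1 i p).2) h3 h4) t
    (by simp [hm]) (by simp [hn])

lemma KT_0 : KT 0 :=
  tab_KT 0 3 1 0x21 rfl rfl
    (by decide +kernel) (by decide +kernel) (by decide +kernel)

lemma KT_1 : KT 1 :=
  tab_KT 1 9 4 0x354021687021687354210876543687354021 rfl rfl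
    (by decide +kernel) (by decide +kernel) (by decide +kernel)

lemma KT_2 : KT 2 :=
  tab_KT 2 15 7 0x583c4e1a097b6d24972b3e0168da5c368d1a2eb057c942e57c0913a64db810e4db6872953ca076e3ca59d1842b64d5e2b9a8c0731 rfl rfl
    (by decide +kernel) (by decide +kernel) (by decide +kernel)

def frF (b N : ℕ) [NeZero b] (i : Fin b × Fin 3) (p : Fin b × Fin 6) : Fin b × Fin 6 :=
  (Fin.ofNat b (N / 32 ^ ((3 * i.1.val + i.2.val) * (6 * b) + 6 * p.1.val + p.2.val) % 32 / 6),
   Fin.ofNat 6 (N / 32 ^ ((3 * i.1.val + i.2.val) * (6 * b) + 6 * p.1.val + p.2.val) % 32))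

lemma frame_of {X : Type} (φ : X × Fin 3 → X × Fin 6 → X × Fin 6)
    (h1 : ∀ x j y a, y ≠ x → (φ (x, j) (y, a)).1 ≠ x ∧ (φ (x, j) (y, a)).1 ≠ y ∧
      φ (x, j) (φ (x, j) (φ (x, j) (y, a))) = (y, a))
    (h3 : ∀ y a z c, y ≠ z → ∃ x j, x ≠ y ∧ x ≠ z ∧
      (φ (x, j) (y, a) = (z, c) ∨ φ (x, j) (z, c) = (y, a)))
    (h4 : ∀ y a x j x' j', y ≠ x → y ≠ x' → (x, j) ≠ (x', j') →
      φ (x, j) (y, a) ≠ φ (x', j') (y, a) ∧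
        ((φ (x', j') (y, a)).1 ≠ x → φ (x, j) (φ (x', j') (y, a)) ≠ (y, a))) :
    FrameOn Set.univ φ := by
  refine ⟨fun x j y a _ _ h => ⟨trivial, h1 x j y a h⟩, ?_⟩
  intro y a z c _ _ hne
  obtain ⟨x, j, hxy, hxz, hi⟩ := h3 y a z c hne
  refine ⟨(x, j), ⟨trivial, hxy, hxz, hi⟩, ?_⟩
  rintro ⟨x', j'⟩ ⟨-, hy, hz, hj⟩
  by_contra hn
  simp only at hy hz
  rcases hi with hi | hi <;> rcases hj with hj | hj
  · exact (h4 y a x' j' x j hy.symm hxy.symm hn).1 (hj.trans hi.symm)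
  · exact (h4 y a x' j' x j hy.symm hxy.symm hn).2 (by rw [hi]; exact hz.symm) (by rw [hi, hj])
  · exact (h4 z c x' j' x j hz.symm hxz.symm hn).2 (by rw [hi]; exact hy.symm) (by rw [hi, hj])
  · exact (h4 z c x' j' x j hz.symm hxz.symm hn).1 (hj.trans hi.symm)

lemma frame_4 : FrameOn Set.univ (frF 4
    0xa70ac6903c4d244d04314e000000002919cab2341113d4c33910000000006b2a4271448f0350e540cc21c0912c00000001cc352dec692a8802c4722400000000dcb31d648a1aca1248b01c00000002d4770ce8ab22460bcad1c45305c950000000194849d61b4312bc1524c5700000001d265a142c46f0b497154130000000216751923c16c4bae69a2aa6d1f28d800000004b0ee5c26aa9ae88c9b67d000000005b9303b2a8baa667da346c80000000) :=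
  frame_of _ (by decide +kernel) (by decide +kernel) (by decide +kernel)

lemma frame_5 : FrameOn Set.univ (frF 5
    0x30da5538099ac9493c31b09953de0800000001890ae0290ce5b20156dc8e33e71550000000003cf1220d50dd4260e65852496aece38da90bc00000002281946a2566c5c82cdd7618502cd100000000f948b840ec6ec41bd7a34a5ba222a000000001ebaa305fcc91804e3703b42998cf52a8d91680000000b901da617696d1c92cc505c3940b8a000000027da0f443eea9c58b4ba1624eba438400000001e37604abcca8d39bc3568e0506ddcb125d16000000008dd99a681165e456ec4ec103da8f560000000279a3f90b88ae8d07ccc1a0ae3640c800000007ebb69b1b53be698ad9d4615636e9c85e59768000000035e5162cfd723509ee89c29b9abf9600000002285d2ee7e36a3353ccd8f3aebb09300000000) :=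
  frame_of _ (by decide +kernel) (by decide +kernel) (by decide +kernel)

lemma blk_KT {X Y K : Type} [Fintype X] [Nonempty X] (g : X → Y) (B : K → Fin 4 → X)
    (f : X → X → K) (s : ℕ) (hs : KT s)
    (h1 : ∀ k i j, i ≠ j → f (B k i) (B k j) = k ∧ g (B k i) ≠ g (B k j))
    (h2 : ∀ x y, g x ≠ g y → (∃ i, B (f x y) i = x) ∧ (∃ i, B (f x y) i = y))
    (h3 : ∀ y, Nat.card {x // g x = y} = s) : KT (Fintype.card X) := by
  classical
  refine gdd_KT g (fun x y => Set.range (B (f x y))) (fun x y h => h2 x y h) ?_ ?_ ?_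
  · rintro x y u v hxy ⟨i, rfl⟩ ⟨j, rfl⟩ huv
    have hij : i ≠ j := fun e => huv (by rw [e])
    exact ⟨(h1 _ i j hij).2, by rw [(h1 _ i j hij).1]⟩
  · intro x y _
    have hinj : Function.Injective (B (f x y)) := by
      intro i j hij
      by_contra hne
      exact (h1 _ i j hne).2 (by rw [hij])
    exact frame_4.transport (Equiv.ofInjective _ hinj).symm
  · intro y
    refine KOn.of_KT _ s ?_ hs
    have : Nat.card {x // g x = y} = Nat.card (Fin s) := by rw [h3]; simp
    exact (Finite.card_eq.1 this).some

lemma td_KT {F : Type} [CommRing F] [Fintype F] [Nontrivial F] (ev : Fin 5 → F)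
    (hev : ∀ i j, i ≠ j → IsUnit (ev i - ev j)) (m : ℕ) (hm : m ≤ Fintype.card F)
    (h1 : KT (Fintype.card F)) (h2 : KT m) : KT (4 * Fintype.card F + m) := by
  classical
  obtain ⟨T, -, hT⟩ := Finset.exists_subset_card_eq (s := (Finset.univ : Finset F)) (n := m)
    (by simpa using hm)
  let g : (Fin 4 × F) ⊕ T → Fin 5 := Sum.elim (fun p => p.1.castSucc) (fun _ => 4)
  let val : (Fin 4 × F) ⊕ T → F := Sum.elim (fun p => p.2) (fun p => p.1)
  have hc4 : ∀ i : Fin 4, i.castSucc ≠ (4 : Fin 5) := by decide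
  have hext : ∀ x y, g x = g y → val x = val y → x = y := by
    rintro (⟨i, a⟩ | a) (⟨j, b⟩ | b) h h'
    · simp only [g, val, Sum.elim_inl] at h h'
      rw [Fin.castSucc_inj.1 h, h']
    · simp only [g, Sum.elim_inl, Sum.elim_inr] at h
      exact (hc4 i h).elim
    · simp only [g, Sum.elim_inl, Sum.elim_inr] at h
      exact (hc4 j h.symm).elim
    · simp only [val, Sum.elim_inr] at h'
      rw [Subtype.ext h']
  have hlt : ∀ k : Fin 5, k ≠ 4 → ∃ i : Fin 4, i.castSucc = k := by decide
  have hsur : ∀ (k : Fin 5) (a : F), (k = 4 → a ∈ T) → ∃ x, g x = k ∧ val x = a := by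
    intro k a hk
    by_cases h : k = 4
    · exact ⟨Sum.inr ⟨a, hk h⟩, h.symm, rfl⟩
    · obtain ⟨i, hi⟩ := hlt k h
      exact ⟨Sum.inl (i, a), hi, rfl⟩
  have hval4 : ∀ x, g x = 4 → val x ∈ T := by
    rintro (⟨i, a⟩ | a) h
    · simp only [g, Sum.elim_inl] at h
      exact (hc4 i h).elim
    · exact a.2
  have hline : ∀ x y, ∃ w : F × F, g x ≠ g y →
      val x = w.1 + w.2 * ev (g x) ∧ val y = w.1 + w.2 * ev (g y) := by
    intro x y
    by_cases h : g x = g y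
    · exact ⟨0, fun h' => absurd h h'⟩
    · obtain ⟨r, hr⟩ := (hev (g x) (g y) h).exists_right_inv
      refine ⟨(val x - (val x - val y) * r * ev (g x), (val x - val y) * r), fun _ => ⟨?_, ?_⟩⟩
      · simp
      · simp only
        linear_combination (val x - val y) * hr
  choose L hL using hline
  have huniq : ∀ x y, g x ≠ g y → ∀ w : F × F, val x = w.1 + w.2 * ev (g x) →
      val y = w.1 + w.2 * ev (g y) → L x y = w := by
    intro x y h w a b
    obtain ⟨c, d⟩ := hL x y h
    have e2 : (L x y).2 = w.2 := by
      apply (hev _ _ h).mul_right_cancel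
      linear_combination d - c + a - b
    refine Prod.ext ?_ e2
    rw [e2] at c
    linear_combination a - c
  have hcard : Fintype.card ((Fin 4 × F) ⊕ T) = 4 * Fintype.card F + m := by simp [hT]
  rw [← hcard]
  refine gdd_KT g (fun x y => {r | val r = (L x y).1 + (L x y).2 * ev (g r)})
    (fun x y h => hL x y h) ?_ ?_ ?_
  · intro x y u v hxy hu hv huv
    have hg : g u ≠ g v := fun e => huv (hext _ _ e (by
      have hu' : val u = _ := hu
      have hv' : val v = _ := hv
      rw [hu', hv', e]))
    refine ⟨hg, ?_⟩
    rw [huniq u v hg (L x y) hu hv]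
  · intro x y _
    generalize L x y = w
    by_cases h4 : w.1 + w.2 * ev 4 ∈ T
    · refine frame_5.transport (Equiv.ofBijective (fun r => g r.1) ⟨?_, ?_⟩)
      · rintro ⟨r, hr⟩ ⟨s, hs⟩ hrs
        simp only [Set.mem_ofPred_eq] at hr hs hrs
        exact Subtype.ext (hext _ _ hrs (by rw [hr, hs, hrs]))
      · intro k
        obtain ⟨r, hr1, hr2⟩ := hsur k (w.1 + w.2 * ev k) (by rintro rfl; exact h4)
        exact ⟨⟨r, by simp only [Set.mem_ofPred_eq]; rw [hr1, hr2]⟩, hr1⟩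
    · have hne : ∀ r : {r | val r = w.1 + w.2 * ev (g r)}, g r.1 ≠ 4 := by
        rintro ⟨r, hr⟩ h
        simp only [Set.mem_ofPred_eq] at hr h
        have := hval4 r h
        rw [hr, h] at this
        exact h4 this
      let e1 : {r | val r = w.1 + w.2 * ev (g r)} ≃ {k : Fin 5 // k ≠ 4} :=
        Equiv.ofBijective (fun r => ⟨g r.1, hne r⟩) ⟨by
          rintro ⟨r, hr⟩ ⟨s, hs⟩ hrs
          simp only [Set.mem_ofPred_eq, Subtype.mk.injEq] at hr hs hrs
          exact Subtype.ext (hext _ _ hrs (by rw [hr, hs, hrs])), by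
          rintro ⟨k, hk⟩
          obtain ⟨r, hr1, hr2⟩ := hsur k (w.1 + w.2 * ev k) (fun h => absurd h hk)
          exact ⟨⟨r, by simp only [Set.mem_ofPred_eq]; rw [hr1, hr2]⟩, Subtype.ext hr1⟩⟩
      exact frame_4.transport (e1.trans (Fintype.equivOfCardEq (by decide)))
  · intro k
    by_cases hk : k = 4
    · refine KOn.of_KT _ m ?_ h2
      have e1 : {x | g x = k} ≃ T := Equiv.ofBijective
        (fun r => ⟨val r.1, hval4 r.1 (by rw [← hk]; exact r.2)⟩) ⟨by
          rintro ⟨r, hr⟩ ⟨s, hs⟩ hrs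
          simp only [Set.mem_ofPred_eq, Subtype.mk.injEq] at hr hs hrs
          exact Subtype.ext (hext _ _ (by rw [hr, hs]) hrs), by
          rintro ⟨a, ha⟩
          obtain ⟨r, hr1, hr2⟩ := hsur k a (fun _ => ha)
          exact ⟨⟨r, hr1⟩, Subtype.ext hr2⟩⟩
      exact e1.trans (Fintype.equivOfCardEq (by simp [hT]))
    · refine KOn.of_KT _ _ ?_ h1
      have e1 : {x | g x = k} ≃ F := Equiv.ofBijective (fun r => val r.1) ⟨by
          rintro ⟨r, hr⟩ ⟨s, hs⟩ hrs
          simp only [Set.mem_ofPred_eq] at hr hs hrs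
          exact Subtype.ext (hext _ _ (by rw [hr, hs]) hrs), by
          intro a
          obtain ⟨r, hr1, hr2⟩ := hsur k a (fun h => absurd h hk)
          exact ⟨⟨r, hr1⟩, hr2⟩⟩
      exact e1.trans (Fintype.equivOfCardEq (by simp))

def blkB (m n C : ℕ) [NeZero m] (k : Fin m × Fin n) (i : Fin 4) : Fin m :=
  k.1 + Fin.ofNat m (C / 32 ^ (4 * k.2.val + i.val) % 32)

def blkI (m n O : ℕ) [NeZero m] [NeZero n] (x y : Fin m) : Fin m × Fin n :=
  (x + Fin.ofNat m (O / 64 ^ (y - x).val % 32), Fin.ofNat n (O / 64 ^ (y - x).val / 32 % 2))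

lemma KT_14 : KT 14 := by
  have := blk_KT (X := Fin 14) (fun x => Fin.ofNat 7 x.val) (blkB 14 1 0x31020)
    (blkI 14 1 0x34828a20800034034a000) 2 KT_2
    (by rintro ⟨k, c⟩; revert k c; decide +kernel) (by decide +kernel)
    (by intro y; rw [Nat.card_eq_fintype_card]; revert y; decide +kernel)
  simpa using this

lemma KT_15 : KT 15 := by
  have := blk_KT (X := Fin 15) (fun x => Fin.ofNat 5 x.val) (blkB 15 1 0x38c20)
    (blkI 15 1 0xe30c20020800e00c00e000) 3 KT_3
    (by rintro ⟨k, c⟩; revert k c; decide +kernel) (by decide +kernel)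
    (by intro y; rw [Nat.card_eq_fintype_card]; revert y; decide +kernel)
  simpa using this

lemma KT_26 : KT 26 := by
  have := blk_KT (X := Fin 26) (fun x => Fin.ofNat 13 x.val) (blkB 26 2 0x82c8048c20)
    (blkI 26 2 0x6575f6a91bd1460bea03682a019d97be0019000) 2 KT_2
    (by rintro ⟨k, c⟩; revert k c; decide +kernel) (by decide +kernel)
    (by intro y; rw [Nat.card_eq_fintype_card]; revert y; decide +kernel)
  simpa using this

lemma td_zmod (n m : ℕ) (h2 : Nat.Coprime 2 n) (h3 : Nat.Coprime 3 n) (hn : 5 ≤ n) (hm : m ≤ n)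
    (k1 : KT n) (k2 : KT m) : KT (4 * n + m) := by
  haveI : NeZero n := ⟨by omega⟩
  haveI : Fact (1 < n) := ⟨by omega⟩
  have u2 : IsUnit (2 : ZMod n) := by
    simpa using (ZMod.isUnit_iff_coprime 2 n).2 h2
  have u3 : IsUnit (3 : ZMod n) := by
    simpa using (ZMod.isUnit_iff_coprime 3 n).2 h3
  have u4 : IsUnit (4 : ZMod n) := by
    have := u2.mul u2
    norm_num at this
    exact this
  have hpos : ∀ i j : Fin 5, i < j → IsUnit (((j.val : ℕ) : ZMod n) - ((i.val : ℕ) : ZMod n)) := by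
    intro i j hij
    have e : ((j.val : ℕ) : ZMod n) - ((i.val : ℕ) : ZMod n) = ((j.val - i.val : ℕ) : ZMod n) := by
      rw [Nat.cast_sub (by omega)]
    rw [e]
    have hr : j.val - i.val = 1 ∨ j.val - i.val = 2 ∨ j.val - i.val = 3 ∨ j.val - i.val = 4 := by
      omega
    rcases hr with h | h | h | h <;> rw [h]
    · simp
    · exact_mod_cast u2
    · exact_mod_cast u3
    · exact_mod_cast u4
  have := td_KT (F := ZMod n) (fun i => ((i.val : ℕ) : ZMod n)) (by
    intro i j hij
    rcases lt_or_gt_of_ne hij with h | h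
    · rw [← neg_sub]; exact (hpos i j h).neg
    · exact hpos j i h) m (by rw [ZMod.card]; exact hm) (by rw [ZMod.card]; exact k1) k2
  rwa [ZMod.card] at this

lemma td_nine (m : ℕ) (hm : m ≤ 9) (k1 : KT 9) (k2 : KT m) : KT (36 + m) := by
  haveI : Fact (Nat.Prime 3) := ⟨by norm_num⟩
  haveI : Fintype (GaloisField 3 2) := Fintype.ofFinite _
  have hc : Fintype.card (GaloisField 3 2) = 9 := by
    rw [← Nat.card_eq_fintype_card, GaloisField.card 3 2 (by norm_num)]
    norm_num
  obtain ⟨ev⟩ : Nonempty (Fin 5 ↪ GaloisField 3 2) := by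
    apply Function.Embedding.nonempty_of_card_le
    rw [hc]; simp
  have := td_KT ev (by
    intro i j hij
    exact isUnit_iff_ne_zero.2 (sub_ne_zero.2 (fun e => hij (ev.injective e)))) m
    (by rw [hc]; exact hm) (by rw [hc]; exact k1) k2
  rwa [hc] at this

lemma KT_all (t : ℕ) : KT t := by
  induction t using Nat.strong_induction_on with
  | _ t ih =>
  have td : ∀ n, Nat.Coprime 2 n → Nat.Coprime 3 n → 5 ≤ n → 4 * n ≤ t → t ≤ 5 * n → KT t := by
    intro n h2 h3 h5 ha hb
    have := td_zmod n (t - 4 * n) h2 h3 h5 (by omega) (ih n (by omega)) (ih _ (by omega))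
    rwa [show 4 * n + (t - 4 * n) = t by omega] at this
  have mul : ∀ s u, t = 2 * s * u + s + u → 0 < s → 0 < u → KT t := by
    intro s u h hs hu
    have : 0 < s * u := Nat.mul_pos hs hu
    have e : 2 * s * u = 2 * (s * u) := by ring
    exact KT_mul s u t (ih s (by omega)) (ih u (by omega)) h
  by_cases hbig : 92 ≤ t
  · have hc : ∀ k, Nat.Coprime 2 (6 * k + 5) ∧ Nat.Coprime 3 (6 * k + 5) := by
      intro k
      constructor
      · rw [Nat.Prime.coprime_iff_not_dvd (by norm_num)]; omega
      · rw [Nat.Prime.coprime_iff_not_dvd (by norm_num)]; omega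
    have hk := hc ((t + 4) / 24 - 1)
    exact td _ hk.1 hk.2 (by omega) (by omega) (by omega)
  by_cases h44 : 68 ≤ t
  · by_cases h : t ≤ 85
    · exact td 17 (by norm_num) (by norm_num) (by norm_num) (by omega) (by omega)
    · exact td 19 (by norm_num) (by norm_num) (by norm_num) (by omega) (by omega)
  by_cases h44 : 44 ≤ t
  · by_cases h : t ≤ 55
    · exact td 11 (by norm_num) (by norm_num) (by norm_num) (by omega) (by omega)
    by_cases h : t ≤ 65
    · exact td 13 (by norm_num) (by norm_num) (by norm_num) (by omega) (by omega)
    by_cases h : t = 66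
    · exact mul 3 9 (by omega) (by norm_num) (by norm_num)
    · exact mul 1 22 (by omega) (by norm_num) (by norm_num)
  by_cases h36 : 36 ≤ t
  · have := td_nine (t - 36) (by omega) KT_9 (ih _ (by omega))
    rwa [show 36 + (t - 36) = t by omega] at this
  by_cases h28 : 28 ≤ t
  · exact td 7 (by norm_num) (by norm_num) (by norm_num) (by omega) (by omega)
  by_cases h20 : 20 ≤ t ∧ t ≤ 25
  · exact td 5 (by norm_num) (by norm_num) (by norm_num) (by omega) (by omega)
  have hlist : t = 0 ∨ t = 1 ∨ t = 2 ∨ t = 3 ∨ t = 4 ∨ t = 5 ∨ t = 6 ∨ t = 7 ∨ t = 8 ∨ t = 9 ∨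
      t = 10 ∨ t = 11 ∨ t = 12 ∨ t = 13 ∨ t = 14 ∨ t = 15 ∨ t = 16 ∨ t = 17 ∨ t = 18 ∨ t = 19 ∨
      t = 26 ∨ t = 27 := by omega
  rcases hlist with h | h | h | h | h | h | h | h | h | h | h | h | h | h | h | h | h | h | h | h |
    h | h
  · rw [h]; exact KT_0
  · rw [h]; exact KT_1
  · rw [h]; exact KT_2
  · rw [h]; exact KT_3
  · exact mul 1 1 h (by norm_num) (by norm_num)
  · rw [h]; exact KT_5
  · rw [h]; exact KT_6
  · exact mul 1 2 h (by norm_num) (by norm_num)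
  · rw [h]; exact KT_8
  · rw [h]; exact KT_9
  · exact mul 1 3 h (by norm_num) (by norm_num)
  · rw [h]; exact KT_11
  · exact mul 2 2 h (by norm_num) (by norm_num)
  · exact mul 1 4 h (by norm_num) (by norm_num)
  · rw [h]; exact KT_14
  · rw [h]; exact KT_15
  · exact mul 1 5 h (by norm_num) (by norm_num)
  · exact mul 2 3 h (by norm_num) (by norm_num)
  · rw [h]; exact KT_18
  · exact mul 1 6 h (by norm_num) (by norm_num)
  · rw [h]; exact KT_26
  · exact mul 2 5 h (by norm_num) (by norm_num)

def tbF {n : ℕ} (N : ℕ) (i : Fin n) (p : Fin 3 × Fin 7) : Fin 3 × Fin 7 :=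
  (Fin.ofNat 3 (N / 32 ^ (21 * i.val + 7 * p.1.val + p.2.val) % 32 / 8),
   Fin.ofNat 7 (N / 32 ^ (21 * i.val + 7 * p.1.val + p.2.val) % 8))

def tb0 : ℕ := 0x25185ab49a9287358b104062907185ab49c9287358b504062906285ab49ca287358b5240629062080aa305a8992541c04b8d9cc4d5c3324a0206508cc56aaa8c6ad03708a8228d58d8120c2899ad8d2898123860a1a15b452d9a24a5a8815806e14265352ad432568a5a91814615036910b3431cb8d6066204e484b30562324a0b6aad4

def tb1 : ℕ := 0x25185ab49a9287358b104062907185ab49c9287358b504062906285ab49ca287358b52406290620954e0244ba9a640c06c95a8d44409589057049590ec68d26c835420b52e1927101a05a2995b2172600ca0b9a41c2b11153344976a3449430860483128ed572a149ad430b4c828811b50959ae4e6412629062082d5a4e51839ac5a928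

def tb3 : ℕ := 0x25185ab49a9287358b104062907185ab49c9287358b504062906285ab49ca287358b5240629062088204b86ca44d0a948a9590d5cd89321a5208208d874929d0acd6b008cc236230d6142a66a722d248c2d430b3008d42562b95a0e521cd62d4929062080d6ad2728c006290620dab49ca306b16a4a1c520c4101a16ad2728b9ac5a928

def tb5 : ℕ := 0x25185ab49a9287358b104062907185ab49c9287358b504062906285ab49ca287358b52406290620814b0b0a49406234eb4b4528735631180a0d236216136a132ab1c22040530eb49ca168a16e525ac198a408050b5633a4989535c859020118658ce15a4ac9621cd5a8201948234e5185ab45b9a86292629062082d5a4e51839ac5a928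

def tb7 : ℕ := 0x25185ab49a9287358b104062907185ab49c9287358b504062906285ab49ca287358b52406290620840629062ad2728c2cd62d4943862080c5252728c2d562d49439a520c4101a728c2d5a2d49439ac018a4188328c2d5a4d49439ac58820314838c2d5a4e49439ac5a883104062c2d5a4e51439ac5a92629062082d5a4e51839ac5a928

def tb8 : ℕ := 0x25185ab49a1cd62d49018a41883185ab49c949439ac584062906219aa2404b6942330368c4b94b21045a05c065636848c39ad0d4a8c30926069574856d148a4a7310c2880391a0454ed4ab9018a5ab2ac8130a34b0d32acd4d702086408a180a194ea24468b4b1a6b38161a44624e32a05d06a90b616a2080c520eb49ca30b316a4a1cd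

def tb9 : ℕ := 0x25185ab49a1cd62d49080c520c423540a9b992805b61d168224b1684b4326425c6c065613538682458024ca8a0550a9963b492d139d05987222a604da8568ab1430236d945144899191598181a41cb80995490321a2257514658276682c15d1039c44e811ac49546954c520c410569394616439ac5a9241882031630b5693939ac5a928

def tb10 : ℕ := 0x269516848a0756c98105a0b338509212498c0e15191584d5b28ad15a2e40e4a334335c1802d2a924435835c2b24ac0494359893a2030052cc6a6a822cd1709451ca6c058d3aae08a386a2c9a14905152cd52ca84b3a6d126116010309062080c5a4e5185aab5250e6b006290620ca30b56935250e6b16629062082b49ca30b21cd62d49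

lemma tab777 (a : ℕ) (ha : a ∈ ({0, 1, 3, 5, 7} : Set ℕ)) : ∃ τ : Fin 7 → Fin 3 × Fin 7 → Fin 3 × Fin 7,
    Dec (fun p q => p.1 ≠ q.1) (fun i => if i.val < a then 3 else 7) τ := by
  simp only [Set.mem_insert_iff, Set.mem_singleton_iff] at ha
  rcases ha with rfl | rfl | rfl | rfl | rfl
  · exact ⟨tbF tb0, Dec_of_uni (by decide +kernel) (by decide +kernel) (by decide +kernel)
      (by decide +kernel)⟩
  · exact ⟨tbF tb1, Dec_of_uni (by decide +kernel) (by decide +kernel) (by decide +kernel)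
      (by decide +kernel)⟩
  · exact ⟨tbF tb3, Dec_of_uni (by decide +kernel) (by decide +kernel) (by decide +kernel)
      (by decide +kernel)⟩
  · exact ⟨tbF tb5, Dec_of_uni (by decide +kernel) (by decide +kernel) (by decide +kernel)
      (by decide +kernel)⟩
  · exact ⟨tbF tb7, Dec_of_uni (by decide +kernel) (by decide +kernel) (by decide +kernel)
      (by decide +kernel)⟩

lemma tab21 (a : ℕ) (ha : a ∈ ({0, 1, 3, 5, 7, 8, 9, 10} : Set ℕ)) :
    ∃ τ : Fin 10 → Fin 3 × Fin 7 → Fin 3 × Fin 7,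
    Dec (fun p q => p ≠ q) (fun i => if i.val < a then 3 else 7) τ := by
  simp only [Set.mem_insert_iff, Set.mem_singleton_iff] at ha
  rcases ha with rfl | rfl | rfl | rfl | rfl | rfl | rfl | rfl
  · exact ⟨tbF tb0, Dec_of_uni (by decide +kernel) (by decide +kernel) (by decide +kernel)
      (by decide +kernel)⟩
  · exact ⟨tbF tb1, Dec_of_uni (by decide +kernel) (by decide +kernel) (by decide +kernel)
      (by decide +kernel)⟩
  · exact ⟨tbF tb3, Dec_of_uni (by decide +kernel) (by decide +kernel) (by decide +kernel)
      (by decide +kernel)⟩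
  · exact ⟨tbF tb5, Dec_of_uni (by decide +kernel) (by decide +kernel) (by decide +kernel)
      (by decide +kernel)⟩
  · exact ⟨tbF tb7, Dec_of_uni (by decide +kernel) (by decide +kernel) (by decide +kernel)
      (by decide +kernel)⟩
  · exact ⟨tbF tb8, Dec_of_uni (by decide +kernel) (by decide +kernel) (by decide +kernel)
      (by decide +kernel)⟩
  · exact ⟨tbF tb9, Dec_of_uni (by decide +kernel) (by decide +kernel) (by decide +kernel)
      (by decide +kernel)⟩
  · exact ⟨tbF tb10, Dec_of_uni (by decide +kernel) (by decide +kernel) (by decide +kernel)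
      (by decide +kernel)⟩

def nn {J : Type} : Option J → ℕ
  | none => 10
  | some _ => 7

def aa {J : Type} (γ : ℕ) (α : J → ℕ) : Option J → ℕ
  | none => γ
  | some j => α j

lemma cnt1 (N a : ℕ) (h : a ≤ N) :
    (∑ i : Fin N, if (if i.val < a then 3 else 7) = 3 then 1 else 0) = a := by
  have : ∀ i : Fin N, (if (if i.val < a then 3 else 7) = 3 then 1 else 0) =
      if i.val < a then 1 else 0 := by
    intro i; split_ifs <;> simp_all
  rw [Finset.sum_congr rfl (fun i _ => this i), ← Finset.card_filter, Fin.card_filter_val_lt]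
  omega

lemma cnt2 (N a b : ℕ) (h : a + b = N) :
    (∑ i : Fin N, if ¬ (if i.val < a then 3 else 7) = 3 then 1 else 0) = b := by
  have h1 := cnt1 N a (by omega)
  have h2 : (∑ i : Fin N, ((if (if i.val < a then 3 else 7) = 3 then 1 else 0) +
      (if ¬ (if i.val < a then 3 else 7) = 3 then 1 else 0))) = N := by
    rw [Finset.sum_congr rfl (g := fun _ => 1) (fun i _ => by split_ifs <;> simp_all)]
    simp
  rw [Finset.sum_add_distrib, h1] at h2
  omega

/-- Lemma 4.2: for `n = 42t + 21`, if `αᵢ ∈ {0,1,3,5,7}` with `αᵢ + βᵢ = 7` for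
`i = 1, …, 3t`, and `γ ∈ {0,1,3,5,7,8,9,10}` with `γ + δ = 10`, then
`HW(n; Σαᵢ + γ, Σβᵢ + δ; 3, 7)` exists. -/
theorem HW_from_pieces (t : ℕ) (α β : Fin (3 * t) → ℕ) (γ δ : ℕ)
    (hα : ∀ i, α i ∈ ({0, 1, 3, 5, 7} : Set ℕ)) (hαβ : ∀ i, α i + β i = 7)
    (hγ : γ ∈ ({0, 1, 3, 5, 7, 8, 9, 10} : Set ℕ)) (hγδ : γ + δ = 10) :
    IsCycleDecomp (⊤ : SimpleGraph (Fin (42 * t + 21))) 3 7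
      ((∑ i, α i) + γ) ((∑ i, β i) + δ) := by
  classical
  obtain ⟨σ, hσ, -⟩ := KT_all t
  let e : Fin t × Fin 3 ≃ Fin (3 * t) := Fintype.equivOfCardEq (by simp [mul_comm])
  choose τ hτ using fun i => tab777 (α i) (hα i)
  obtain ⟨τ0, hτ0⟩ := tab21 γ hγ
  let A : Option (Fin t × Fin 3) → Type := fun j => Fin (nn j)
  let k : ∀ j, A j → ℕ := fun j (i : Fin (nn j)) => if i.val < aa γ (fun j => α (e j)) j then 3 else 7
  let T : ∀ j, A j → Fin 3 × Fin 7 → Fin 3 × Fin 7 := fun j => match j with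
    | none => fun (i : Fin 10) p => τ0 i p
    | some j => fun (i : Fin 7) p => τ (e j) i p
  obtain ⟨ρ, hρ⟩ := inflate σ hσ A k T (fun j => hτ (e j)) hτ0
  refine final_conv (I := Σ j : Option (Fin t × Fin 3), Fin (nn j)) _ ?_ ρ hρ _ _ _ ?_ ?_ ?_
  · rintro ⟨j, i⟩
    simp only [k]
    split_ifs <;> simp
  · simp; ring
  · rw [Fintype.card_subtype, Finset.card_filter, ← Finset.univ_sigma_univ, Finset.sum_sigma,
      Fintype.sum_option, ← e.sum_comp α, add_comm]
    congr 1
    · refine Finset.sum_congr rfl (fun j _ => ?_)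
      exact cnt1 7 (α (e j)) (by have := hαβ (e j); omega)
    · exact cnt1 10 γ (by omega)
  · rw [Fintype.card_subtype, Finset.card_filter, ← Finset.univ_sigma_univ, Finset.sum_sigma,
      Fintype.sum_option, ← e.sum_comp β, add_comm]
    congr 1
    · refine Finset.sum_congr rfl (fun j _ => ?_)
      exact cnt2 7 (α (e j)) _ (hαβ (e j))
    · exact cnt2 10 γ _ hγδ
end
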